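/- (Theorem 19) Let 0 < θ₀ < θ₁ < 1, 0 < q₁, r₀, r₁, r ≤ ∞, a, a₁, b₀, b₁ ∈ SV, and ‖s^{-1/r₁} b₁(s)/a₁(s)‖_{r₁,(0,1)} < ∞. Put c₁(t) = a₁(t) ‖s^{-1/r₁} b₁(s)/a₁(s)‖_{r₁,(0,t)} and ρ(t) = t^{θ₁-θ₀} b₀(t)/c₁(t). (i) If 0 < θ < 1 then (Ā_{θ₀,r₀;b₀}, Ā^𝓡_{θ₁,r₁,b₁,q₁,a₁})_{θ,r;a} ≅ Ā_{η,r;a^#}, where η = (1-θ)θ₀ + θθ₁ and a^#(t) ≈ b₀(t)^{1-θ} c₁(t)^θ a(ρ(t)). (ii) If additionally ‖s^{-1/r} a(s)‖_{r,(1,∞)} < ∞, then (Ā_{θ₀,r₀;b₀}, Ā^𝓡_{θ₁,r₁,b₁,q₁,a₁})_{0,r;a} ≅ Ā^𝓛_{θ₀,r,a^#,r₀,b₀}, where a^#(t) ≈ b₀(t) a(ρ(t)). -/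

import Mathlib

open MeasureTheory Set ENNReal Filter

noncomputable section

/-- The `L_q` quasi-norm (with respect to Lebesgue measure) of an `ℝ≥0∞`-valued
function over a set of reals; for `q = ∞` it is the essential supremum. -/
def LqNorm (q : ℝ≥0∞) (s : Set ℝ) (g : ℝ → ℝ≥0∞) : ℝ≥0∞ :=
  if q = ∞ then essSup g (volume.restrict s)
  else (∫⁻ t in s, g t ^ q.toReal) ^ q⁻¹.toReal

/-- The weight `s ↦ s ^ (-1/r) * b s`, as an `ℝ≥0∞`-valued function
(`1/∞ = 0` by convention). -/
def svWgt (r : ℝ≥0∞) (b : ℝ → ℝ) : ℝ → ℝ≥0∞ :=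
  fun s => ENNReal.ofReal (s ^ (-(r⁻¹.toReal)) * b s)

/-- `f` and `g` are equivalent on `s`: each is bounded by a constant multiple
of the other there. -/
def EquivOn (s : Set ℝ) (f g : ℝ → ℝ) : Prop :=
  ∃ C : ℝ, 0 < C ∧ ∀ t ∈ s, C⁻¹ * g t ≤ f t ∧ f t ≤ C * g t

/-- A positive measurable function `b` on `(0,∞)` is slowly varying if for every
`ε > 0`, `t ^ ε * b t` is equivalent to a non-decreasing function and
`t ^ (-ε) * b t` is equivalent to a non-increasing function. -/
def SlowlyVarying (b : ℝ → ℝ) : Prop :=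
  AEMeasurable b (volume.restrict (Ioi 0)) ∧ (∀ t ∈ Ioi (0:ℝ), 0 < b t) ∧
    ∀ ε : ℝ, 0 < ε →
      (∃ g : ℝ → ℝ, MonotoneOn g (Ioi 0) ∧ EquivOn (Ioi 0) (fun t => t ^ ε * b t) g) ∧
      (∃ g : ℝ → ℝ, AntitoneOn g (Ioi 0) ∧ EquivOn (Ioi 0) (fun t => t ^ (-ε) * b t) g)

/-- A quasi-Banach space continuously embedded into the ambient (Hausdorff) space `E`,
recorded via its extended-real-valued quasi-norm; the space itself is the set of
vectors of finite quasi-norm. -/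
structure QuasiBanach (E : Type*) [AddCommGroup E] [Module ℝ E] where
  N : E → ℝ≥0∞
  zero : N 0 = 0
  definite : ∀ x, N x = 0 → x = 0
  smul : ∀ (c : ℝ) (x : E), N (c • x) = ENNReal.ofReal |c| * N x
  quasi : ∃ C : ℝ≥0∞, 1 ≤ C ∧ C ≠ ∞ ∧ ∀ x y, N (x + y) ≤ C * (N x + N y)
  complete : ∀ f : ℕ → E,
    (∀ ε : ℝ≥0∞, 0 < ε → ∃ M : ℕ, ∀ m ≥ M, ∀ n ≥ M, N (f m - f n) < ε) →
    (∀ n, N (f n) ≠ ∞) →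
    ∃ g : E, N g ≠ ∞ ∧ Tendsto (fun n => N (f n - g)) atTop (nhds 0)

variable {E : Type*} [AddCommGroup E] [Module ℝ E]

/-- The Peetre K-functional of the couple whose quasi-norms are `N₀`, `N₁`. -/
def Kf (N₀ N₁ : E → ℝ≥0∞) (t : ℝ) (f : E) : ℝ≥0∞ :=
  ⨅ g : E, N₀ g + ENNReal.ofReal t * N₁ (f - g)

/-- The quasi-norm of the real interpolation space `Ā_{θ,q;b}`. -/
def normK (N₀ N₁ : E → ℝ≥0∞) (θ : ℝ) (q : ℝ≥0∞) (b : ℝ → ℝ) (f : E) : ℝ≥0∞ :=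
  LqNorm q (Ioi 0) fun u =>
    ENNReal.ofReal (u ^ (-θ - q⁻¹.toReal) * b u) * Kf N₀ N₁ u f

/-- The quasi-norm of the limiting interpolation space `Ā^𝓛_{σ,r,b,q,a}`. -/
def normL (N₀ N₁ : E → ℝ≥0∞) (σ : ℝ) (r q : ℝ≥0∞) (b a : ℝ → ℝ) (f : E) : ℝ≥0∞ :=
  LqNorm r (Ioi 0) fun t =>
    ENNReal.ofReal (t ^ (-(r⁻¹.toReal)) * (b t / a t)) *
      LqNorm q (Ioo 0 t) fun u =>
        ENNReal.ofReal (u ^ (-σ - q⁻¹.toReal) * a u) * Kf N₀ N₁ u f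

/-- The quasi-norm of the limiting interpolation space `Ā^𝓡_{σ,r,b,q,a}`. -/
def normR (N₀ N₁ : E → ℝ≥0∞) (σ : ℝ) (r q : ℝ≥0∞) (b a : ℝ → ℝ) (f : E) : ℝ≥0∞ :=
  LqNorm r (Ioi 0) fun t =>
    ENNReal.ofReal (t ^ (-(r⁻¹.toReal)) * (b t / a t)) *
      LqNorm q (Ioi t) fun u =>
        ENNReal.ofReal (u ^ (-σ - q⁻¹.toReal) * a u) * Kf N₀ N₁ u f

/-- Two (extended-real-valued) quasi-norms define the same space with
equivalent quasi-norms. -/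
def EquivNorms (nX nY : E → ℝ≥0∞) : Prop :=
  ∃ C : ℝ≥0∞, 0 < C ∧ C ≠ ∞ ∧ ∀ f : E, C⁻¹ * nY f ≤ nX f ∧ nX f ≤ C * nY f

/-!
The theorem rests on a Holmstedt-type formula for the couple `X₀ = Ā_{θ₀,r₀;b₀}`,
`X₁ = Ā^𝓡_{θ₁,r₁,b₁,q₁,a₁}`. Uniformly in `t` and `f`, the functional `K(ρ(t), f; X₀, X₁)` is
bounded below by the `X₀`-quasi-norm integral of `K(·, f)` restricted to `(0, t)`, and above by the
same quantity plus `ρ(t)` times quasi-norms of `K(·, f)` over `(t, ∞)`. All the functions involved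
change by bounded factors on dyadic intervals, so every quasi-norm may be replaced by an `ℓ_q`
quasi-norm of samples at the points `2 ^ k`; as `ρ` has positive index `θ₁ - θ₀`, the function
`s ↦ K(s, f; X₀, X₁)` may be sampled at the points `ρ(2 ^ k)` instead. The discrete Hardy
inequality, valid for all positive exponents, absorbs the terms over `(t, ∞)`. If `0 < θ`, it also
absorbs the quasi-norm over `(0, t)`, which gives (i); if `θ = 0`, that quasi-norm stays, and it is
the inner quasi-norm of the `𝓛`-space in (ii).
-/

/-- `φ ≲ ψ`: the function `φ` is bounded by a finite constant multiple of `ψ`. Inequalities "with a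
constant independent of `f`, `t`, …" become `≲` between functions of the tuple `(f, t, …)`. -/
def IsDominated {X : Type*} (φ ψ : X → ℝ≥0∞) : Prop :=
  ∃ C : ℝ≥0∞, C ≠ ∞ ∧ ∀ x, φ x ≤ C * ψ x

infix:50 " ≲ " => IsDominated

/-- `φ ≲≳ ψ`: each of the two functions is bounded by a finite constant multiple of the other. -/
def IsComparable {X : Type*} (φ ψ : X → ℝ≥0∞) : Prop :=
  φ ≲ ψ ∧ ψ ≲ φ

infix:50 " ≲≳ " => IsComparable

section Domination

variable {X Y : Type*} {φ φ' ψ ψ' χ : X → ℝ≥0∞}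

theorem isDominated_of_le (h : ∀ x, φ x ≤ ψ x) : φ ≲ ψ :=
  ⟨1, one_ne_top, fun x => by simpa only [one_mul] using h x⟩

theorem IsDominated.refl (φ : X → ℝ≥0∞) : φ ≲ φ :=
  isDominated_of_le fun _ => le_rfl

theorem IsDominated.trans (h : φ ≲ ψ) (h' : ψ ≲ χ) : φ ≲ χ := by
  obtain ⟨C, hC, h⟩ := h
  obtain ⟨D, hD, h'⟩ := h'
  refine ⟨C * D, by finiteness, fun x => ?_⟩
  calc φ x ≤ C * ψ x := h x
    _ ≤ C * (D * χ x) := by gcongr; exact h' x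
    _ = C * D * χ x := (mul_assoc _ _ _).symm

instance : Trans (IsDominated (X := X)) IsDominated IsDominated :=
  ⟨IsDominated.trans⟩

theorem IsDominated.comp (h : φ ≲ ψ) (e : Y → X) : (fun y => φ (e y)) ≲ fun y => ψ (e y) :=
  let ⟨C, hC, h⟩ := h
  ⟨C, hC, fun y => h (e y)⟩

theorem IsDominated.mul (h : φ ≲ ψ) (h' : φ' ≲ ψ') :
    (fun x => φ x * φ' x) ≲ fun x => ψ x * ψ' x := by
  obtain ⟨C, hC, h⟩ := h
  obtain ⟨D, hD, h'⟩ := h'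
  exact ⟨C * D, by finiteness, fun x => (mul_le_mul' (h x) (h' x)).trans_eq (by ring)⟩

theorem IsDominated.add_le (h : φ ≲ χ) (h' : ψ ≲ χ) : (fun x => φ x + ψ x) ≲ χ := by
  obtain ⟨C, hC, h⟩ := h
  obtain ⟨D, hD, h'⟩ := h'
  exact ⟨C + D, by finiteness, fun x => (add_le_add (h x) (h' x)).trans_eq (add_mul _ _ _).symm⟩

theorem IsDominated.add (h : φ ≲ ψ) (h' : φ' ≲ ψ') :
    (fun x => φ x + φ' x) ≲ fun x => ψ x + ψ' x :=
  (h.trans (isDominated_of_le fun _ => le_self_add)).add_le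
    (h'.trans (isDominated_of_le fun _ => le_add_self))

theorem IsDominated.iInf {ι : Type*} [Nonempty ι] {F : X → ι → ℝ≥0∞}
    (h : (fun p : X × ι => φ p.1) ≲ fun p => F p.1 p.2) : φ ≲ fun x => ⨅ i, F x i := by
  obtain ⟨C, hC, h⟩ := h
  refine ⟨C, hC, fun x => ?_⟩
  rw [ENNReal.mul_iInf fun h => absurd h hC]
  exact le_iInf fun i => h (x, i)

theorem IsComparable.refl (φ : X → ℝ≥0∞) : φ ≲≳ φ :=
  ⟨.refl φ, .refl φ⟩

theorem IsComparable.symm (h : φ ≲≳ ψ) : ψ ≲≳ φ :=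
  And.symm h

theorem IsComparable.trans (h : φ ≲≳ ψ) (h' : ψ ≲≳ χ) : φ ≲≳ χ :=
  ⟨h.1.trans h'.1, h'.2.trans h.2⟩

instance : Trans (IsComparable (X := X)) IsComparable IsComparable :=
  ⟨IsComparable.trans⟩

theorem isComparable_of_eq (h : ∀ x, φ x = ψ x) : φ ≲≳ ψ :=
  ⟨isDominated_of_le fun x => (h x).le, isDominated_of_le fun x => (h x).ge⟩

theorem IsComparable.comp (h : φ ≲≳ ψ) (e : Y → X) : (fun y => φ (e y)) ≲≳ fun y => ψ (e y) :=
  ⟨h.1.comp e, h.2.comp e⟩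

theorem IsComparable.mul (h : φ ≲≳ ψ) (h' : φ' ≲≳ ψ') :
    (fun x => φ x * φ' x) ≲≳ fun x => ψ x * ψ' x :=
  ⟨h.1.mul h'.1, h.2.mul h'.2⟩

end Domination

theorem IsComparable.equivNorms {X : Type*} {nX nY : X → ℝ≥0∞} (h : nX ≲≳ nY) :
    EquivNorms nX nY := by
  obtain ⟨⟨C, hC, hXY⟩, ⟨D, hD, hYX⟩⟩ := h
  refine ⟨C + D + 1, by positivity, by finiteness, fun f => ⟨?_, (hXY f).trans ?_⟩⟩
  · rw [← ENNReal.div_eq_inv_mul]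
    refine ENNReal.div_le_of_le_mul' ((hYX f).trans ?_)
    gcongr
    rw [add_right_comm]
    exact le_add_self
  · gcongr
    rw [add_assoc]
    exact le_self_add

/-- The `ℓ_q` quasi-norm of a family of extended nonnegative numbers. -/
abbrev ellNorm {ι : Type*} [MeasurableSpace ι] (q : ℝ≥0∞) (x : ι → ℝ≥0∞) : ℝ≥0∞ :=
  eLpNorm x q Measure.count

theorem ellNorm_mono {ι : Type*} [MeasurableSpace ι] {q : ℝ≥0∞} {x y : ι → ℝ≥0∞}
    (h : ∀ i, x i ≤ y i) : ellNorm q x ≤ ellNorm q y :=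
  eLpNorm_mono_enorm h

section EllNorm

variable {ι ι' X : Type*} [MeasurableSpace ι] [DiscreteMeasurableSpace ι]
  [MeasurableSpace ι'] [DiscreteMeasurableSpace ι'] {q : ℝ≥0∞}

theorem ellNorm_top (x : ι → ℝ≥0∞) : ellNorm ∞ x = ⨆ i, x i := by
  simp only [ellNorm, eLpNorm_exponent_top, eLpNormEssSup_count, enorm_eq_self]

theorem le_ellNorm (hq : q ≠ 0) (x : ι → ℝ≥0∞) (i : ι) : x i ≤ ellNorm q x :=
  enorm_le_eLpNorm_count x i hq

variable [Countable ι']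

theorem ellNorm_indicator_le {e : ι → ι'} {A : Set ι'} (h : A ⊆ range e) (x : ι' → ℝ≥0∞) :
    ellNorm q (A.indicator x) ≤ ellNorm q (x ∘ e) := by
  have hcount : Measure.count.restrict A ≤ Measure.map e Measure.count := by
    refine Measure.le_iff.2 fun s hs => ?_
    rw [Measure.restrict_apply hs, Measure.map_apply .of_discrete hs,
      Measure.count_apply .of_discrete, Measure.count_apply .of_discrete, ENat.toENNReal_le]
    calc (s ∩ A).encard ≤ (e '' (e ⁻¹' s)).encard :=
          encard_le_encard (by rw [image_preimage_eq_inter_range]; gcongr)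
      _ ≤ (e ⁻¹' s).encard := encard_image_le _ _
  calc ellNorm q (A.indicator x) = eLpNorm x q (Measure.count.restrict A) :=
        eLpNorm_indicator_eq_eLpNorm_restrict .of_discrete
    _ ≤ eLpNorm x q (Measure.map e Measure.count) := eLpNorm_mono_measure x hcount
    _ = ellNorm q (x ∘ e) := eLpNorm_map_measure .of_discrete .of_discrete

theorem ellNorm_comp_le_of_encard_fiber_le {N : ℕ} {e : ι → ι'}
    (he : ∀ j, (e ⁻¹' {j}).encard ≤ N) (x : ι' → ℝ≥0∞) :
    ellNorm q (x ∘ e) ≤ (N : ℝ≥0∞) ^ (1 / q).toReal * ellNorm q x := by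
  have hcount : Measure.map e Measure.count ≤ (N : ℝ≥0∞) • Measure.count := by
    refine Measure.le_iff.2 fun s hs => ?_
    calc Measure.map e Measure.count s = Measure.count (⋃ j ∈ s, e ⁻¹' {j}) := by
          rw [Measure.map_apply .of_discrete hs, biUnion_preimage_singleton]
      _ ≤ ∑' j : s, Measure.count (e ⁻¹' {j.1}) := measure_biUnion_le _ s.to_countable _
      _ ≤ ∑' _ : s, (N : ℝ≥0∞) := by
          gcongr with j
          rw [Measure.count_apply .of_discrete]
          exact ENat.toENNReal_le.2 (he j)
      _ = ((N : ℝ≥0∞) • Measure.count) s := by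
          rw [ENNReal.tsum_const, Measure.smul_apply, Measure.count_apply hs, smul_eq_mul, mul_comm]
          rfl
  calc ellNorm q (x ∘ e) = eLpNorm x q (Measure.map e Measure.count) :=
        (eLpNorm_map_measure .of_discrete .of_discrete).symm
    _ ≤ eLpNorm x q ((N : ℝ≥0∞) • Measure.count) := eLpNorm_mono_measure x hcount
    _ ≤ (N : ℝ≥0∞) ^ (1 / q).toReal * ellNorm q x := eLpNorm_smul_measure_le ..

theorem ellNorm_comp_le_of_injective {e : ι → ι'} (he : e.Injective) (x : ι' → ℝ≥0∞) :
    ellNorm q (x ∘ e) ≤ ellNorm q x := by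
  simpa using ellNorm_comp_le_of_encard_fiber_le (N := 1) (fun j => encard_le_one_iff.2
    fun i k hi hk => he (hi.trans hk.symm)) x

variable [Countable ι]

theorem ellNorm_add_le (q : ℝ≥0∞) : (fun p : (ι → ℝ≥0∞) × (ι → ℝ≥0∞) => ellNorm q (p.1 + p.2)) ≲
    fun p => ellNorm q p.1 + ellNorm q p.2 :=
  ⟨LpAddConst q, (LpAddConst_lt_top q).ne, fun _ => eLpNorm_add_le' .of_discrete .of_discrete q⟩

theorem ellNorm_rpow (hq : q ≠ 0) (hq' : q ≠ ∞) (x : ι → ℝ≥0∞) :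
    ellNorm q x ^ q.toReal = ∑' i, x i ^ q.toReal := by
  rw [ellNorm, eLpNorm_eq_lintegral_rpow_enorm_toReal hq hq', one_div,
    ENNReal.rpow_inv_rpow (toReal_pos hq hq').ne', lintegral_count]
  simp only [enorm_eq_self]

theorem ellNorm_const_mul (hq : q ≠ 0) (c : ℝ≥0∞) (x : ι → ℝ≥0∞) :
    ellNorm q (fun i => c * x i) = c * ellNorm q x := by
  rcases eq_or_ne q ∞ with rfl | hq'
  · simp only [ellNorm_top, ENNReal.mul_iSup]
  · have hq₀ := toReal_pos hq hq'
    rw [← (ENNReal.strictMono_rpow_of_pos hq₀).injective.eq_iff,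
      ENNReal.mul_rpow_of_nonneg _ _ hq₀.le, ellNorm_rpow hq hq', ellNorm_rpow hq hq']
    simp only [ENNReal.mul_rpow_of_nonneg _ _ hq₀.le, ENNReal.tsum_mul_left]

theorem ellNorm_mul_const (hq : q ≠ 0) (x : ι → ℝ≥0∞) (c : ℝ≥0∞) :
    ellNorm q (fun i => x i * c) = ellNorm q x * c := by
  simpa only [mul_comm c] using ellNorm_const_mul hq c x

theorem IsDominated.ellNorm (hq : q ≠ 0) {x y : X → ι → ℝ≥0∞}
    (h : (fun p : X × ι => x p.1 p.2) ≲ fun p => y p.1 p.2) :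
    (fun p => ellNorm q (x p)) ≲ fun p => ellNorm q (y p) := by
  obtain ⟨C, hC, h⟩ := h
  refine ⟨C, hC, fun p => ?_⟩
  rw [← ellNorm_const_mul hq]
  exact ellNorm_mono fun i => h (p, i)

theorem IsComparable.ellNorm (hq : q ≠ 0) {x y : X → ι → ℝ≥0∞}
    (h : (fun p : X × ι => x p.1 p.2) ≲≳ fun p => y p.1 p.2) :
    (fun p => ellNorm q (x p)) ≲≳ fun p => ellNorm q (y p) :=
  ⟨h.1.ellNorm hq, h.2.ellNorm hq⟩

theorem ellNorm_comm (hq : q ≠ 0) (x : ι → ι' → ℝ≥0∞) :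
    ellNorm q (fun i => ellNorm q (x i)) = ellNorm q fun j => ellNorm q fun i => x i j := by
  rcases eq_or_ne q ∞ with rfl | hq'
  · simpa only [ellNorm_top] using iSup_comm
  · rw [← (ENNReal.strictMono_rpow_of_pos (toReal_pos hq hq')).injective.eq_iff]
    simpa only [ellNorm_rpow hq hq'] using ENNReal.tsum_comm

theorem ellNorm_pow_ne_top (hq : q ≠ 0) {l : ℝ≥0∞} (hl : l < 1) :
    ellNorm q (fun j : ℕ => l ^ j) ≠ ∞ := by
  rcases eq_or_ne q ∞ with rfl | hq'
  · rw [ellNorm_top]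
    exact ((iSup_le fun j => pow_le_one' hl.le j).trans_lt one_lt_top).ne
  · have hq₀ := toReal_pos hq hq'
    have hlq : l ^ q.toReal < 1 := ENNReal.rpow_lt_one hl hq₀
    have hsum : ellNorm q (fun j : ℕ => l ^ j) ^ q.toReal = (1 - l ^ q.toReal)⁻¹ := by
      rw [ellNorm_rpow hq hq', ← ENNReal.tsum_geometric]
      simp only [← ENNReal.rpow_natCast, ← ENNReal.rpow_mul, mul_comm]
    rw [ne_eq, ← ENNReal.rpow_eq_top_iff_of_pos hq₀, hsum]
    exact ENNReal.inv_ne_top.2 (tsub_pos_of_lt hlq).ne'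

end EllNorm

/-- The `ℓ_q` quasi-norm of `x` along the ray `k, k + s, k + 2s, …` of `ℤ`; the discrete
counterpart of the inner quasi-norms of the `𝓡`-spaces (`s = 1`) and the `𝓛`-spaces (`s = -1`). -/
def rayNorm (q : ℝ≥0∞) (s : ℤ) (x : ℤ → ℝ≥0∞) (k : ℤ) : ℝ≥0∞ :=
  ellNorm q fun j : ℕ => x (k + s * j)

/-- The weight `w` decays at least geometrically in the direction `s`, uniformly in the starting
point. -/
def DecaysAlong (s : ℤ) (w : ℤ → ℝ≥0∞) : Prop :=
  ∃ C ≠ ∞, ∃ l < (1 : ℝ≥0∞), ∀ (k : ℤ) (j : ℕ), w (k + s * j) ≤ C * l ^ j * w k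

section RayNorm

variable {X : Type*} {q r : ℝ≥0∞} {s : ℤ} {w w' : ℤ → ℝ≥0∞}

theorem le_rayNorm (hq : q ≠ 0) (s : ℤ) (x : ℤ → ℝ≥0∞) (k : ℤ) : x k ≤ rayNorm q s x k := by
  simpa [rayNorm] using le_ellNorm hq (fun j : ℕ => x (k + s * j)) 0

theorem rayNorm_add_le (q : ℝ≥0∞) (s : ℤ) (x : ℤ → ℝ≥0∞) (k : ℤ) (i : ℕ) :
    rayNorm q s x (k + s * i) ≤ rayNorm q s x k := by
  have h := ellNorm_comp_le_of_injective (q := q) (add_right_injective i)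
    fun j : ℕ => x (k + s * j)
  simpa only [rayNorm, Function.comp_def, Nat.cast_add, mul_add, add_assoc] using h

theorem rayNorm_le_ellNorm (hs : s ≠ 0) (q : ℝ≥0∞) (x : ℤ → ℝ≥0∞) (k : ℤ) :
    rayNorm q s x k ≤ ellNorm q x :=
  ellNorm_comp_le_of_injective (e := fun j : ℕ => k + s * j)
    ((add_right_injective k).comp ((mul_right_injective₀ hs).comp Nat.cast_injective)) x

theorem rayNorm_const_mul (hq : q ≠ 0) (s : ℤ) (c : ℝ≥0∞) (x : ℤ → ℝ≥0∞) (k : ℤ) :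
    rayNorm q s (fun i => c * x i) k = c * rayNorm q s x k :=
  ellNorm_const_mul hq c _

theorem IsDominated.rayNorm (hq : q ≠ 0) (s : ℤ) {x y : X → ℤ → ℝ≥0∞}
    (h : (fun p : X × ℤ => x p.1 p.2) ≲ fun p => y p.1 p.2) :
    (fun p : X × ℤ => rayNorm q s (x p.1) p.2) ≲ fun p => rayNorm q s (y p.1) p.2 :=
  IsDominated.ellNorm hq (h.comp fun p : (X × ℤ) × ℕ => (p.1.1, p.1.2 + s * p.2))

theorem ellNorm_dominated_rayNorm (q : ℝ≥0∞) :
    (fun p : (ℤ → ℝ≥0∞) × ℤ => ellNorm q p.1) ≲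
      fun p => rayNorm q (-1) p.1 p.2 + rayNorm q 1 p.1 p.2 := by
  refine IsDominated.trans (?_ : _ ≲ fun p : (ℤ → ℝ≥0∞) × ℤ =>
    ellNorm q ((Iic p.2).indicator p.1) + ellNorm q ((Iic p.2)ᶜ.indicator p.1)) ?_
  · simpa only [indicator_self_add_compl] using (ellNorm_add_le q).comp
      fun p : (ℤ → ℝ≥0∞) × ℤ => ((Iic p.2).indicator p.1, (Iic p.2)ᶜ.indicator p.1)
  · refine isDominated_of_le fun p =>
      add_le_add (ellNorm_indicator_le ?_ _) (ellNorm_indicator_le ?_ _)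
    · exact fun i hi => ⟨(p.2 - i).toNat, by grind⟩
    · exact fun i hi => ⟨(i - p.2).toNat, by grind⟩

theorem DecaysAlong.of_comparable (h : DecaysAlong s w) (hw : w ≲≳ w') : DecaysAlong s w' := by
  obtain ⟨C, hC, l, hl, h⟩ := h
  obtain ⟨⟨D, hD, hw⟩, D', hD', hw'⟩ := hw
  refine ⟨D' * C * D, by finiteness, l, hl, fun k j => ?_⟩
  calc w' (k + s * j) ≤ D' * w (k + s * j) := hw' _
    _ ≤ D' * (C * l ^ j * (D * w' k)) := by gcongr; exact (h k j).trans (by gcongr; exact hw k)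
    _ = D' * C * D * l ^ j * w' k := by ring

theorem DecaysAlong.rayNorm_dominated (h : DecaysAlong s w) (hq : q ≠ 0) : rayNorm q s w ≲ w := by
  obtain ⟨C, hC, l, hl, h⟩ := h
  refine ⟨C * ellNorm q fun j : ℕ => l ^ j,
    ENNReal.mul_ne_top hC (ellNorm_pow_ne_top hq hl), fun k => ?_⟩
  rw [← ellNorm_const_mul hq, ← ellNorm_mul_const hq]
  exact ellNorm_mono (h k)

/-- Giving up a square root of the geometric weight is what frees Hardy's inequality from any
relation between `q` and `r`. -/
theorem ellNorm_pow_mul_dominated (hq : q ≠ 0) (hr : r ≠ 0) {m : ℝ≥0∞} (hm : m < 1) :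
    (fun y : ℕ → ℝ≥0∞ => ellNorm q fun j => (m * m) ^ j * y j) ≲
      fun y => ellNorm r fun j => m ^ j * y j := by
  refine ⟨ellNorm q fun j : ℕ => m ^ j, ellNorm_pow_ne_top hq hm, fun y => ?_⟩
  rw [← ellNorm_mul_const hq]
  refine ellNorm_mono fun j => ?_
  rw [mul_pow, mul_assoc]
  gcongr
  exact le_ellNorm hr (fun j => m ^ j * y j) j

theorem hardy_rayNorm (hw : DecaysAlong (-s) w) (hq : q ≠ 0) (hr : r ≠ 0) :
    (fun x => ellNorm r fun k => w k * rayNorm q s x k) ≲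
      fun x => ellNorm r fun k => w k * x k := by
  obtain ⟨C, hC, l, hl, hw⟩ := hw
  obtain ⟨m, hm, rfl⟩ : ∃ m < 1, l = m * m :=
    ⟨l ^ (1 / 2 : ℝ), ENNReal.rpow_lt_one hl (by norm_num), by
      rw [← ENNReal.rpow_add_of_nonneg _ _ (by norm_num) (by norm_num)]; norm_num⟩
  have hpoint : (fun p : (ℤ → ℝ≥0∞) × ℤ => w p.2 * rayNorm q s p.1 p.2) ≲
      fun p => ellNorm r fun j : ℕ => m ^ j * (w (p.2 + s * j) * p.1 (p.2 + s * j)) := by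
    refine IsDominated.trans ⟨C, hC, fun p => ?_⟩ ((ellNorm_pow_mul_dominated hq hr hm).comp
      fun p : (ℤ → ℝ≥0∞) × ℤ => fun j : ℕ => w (p.2 + s * j) * p.1 (p.2 + s * j))
    beta_reduce
    rw [← rayNorm_const_mul hq, ← ellNorm_const_mul hq]
    refine ellNorm_mono fun j => ?_
    have hj := hw (p.2 + s * j) j
    rw [neg_mul, add_neg_cancel_right] at hj
    exact (mul_le_mul_left hj _).trans_eq (by ring)
  calc (fun x => ellNorm r fun k => w k * rayNorm q s x k)
      ≲ fun x => ellNorm r fun k => ellNorm r fun j : ℕ =>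
          m ^ j * (w (k + s * j) * x (k + s * j)) := .ellNorm hr hpoint
    _ ≲ fun x => ellNorm r fun k => w k * x k := by
      refine ⟨ellNorm r fun j : ℕ => m ^ j, ellNorm_pow_ne_top hr hm, fun x => ?_⟩
      beta_reduce
      rw [ellNorm_comm hr, ← ellNorm_mul_const hr]
      refine ellNorm_mono fun j => ?_
      rw [ellNorm_const_mul hr]
      gcongr
      exact ellNorm_comp_le_of_injective (add_left_injective (s * j : ℤ)) fun k => w k * x k

theorem ellNorm_mul_rayNorm_comparable (hw : DecaysAlong (-s) w) (hq : q ≠ 0) (hr : r ≠ 0) :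
    (fun x => ellNorm r fun k => w k * rayNorm q s x k) ≲≳ fun x => ellNorm r fun k => w k * x k :=
  ⟨hardy_rayNorm hw hq hr,
    isDominated_of_le fun x => ellNorm_mono fun k => mul_le_mul_right (le_rayNorm hq s x k) _⟩

end RayNorm

/-- The measure `du / u`, the Haar measure of the multiplicative group `(0, ∞)`. -/
def dlog : Measure ℝ :=
  volume.withDensity fun u => ENNReal.ofReal u⁻¹

/-- Moving the argument of a member of the family `Φ` on the logarithmic scale by a bounded amount
changes its value by at most a bounded factor, uniformly over the family. -/
def UnifDoubling {X : Type*} (Φ : X → ℝ → ℝ≥0∞) : Prop :=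
  ∀ B : ℝ, ∃ C ≠ ∞, ∀ x u v, 0 < u → 0 < v → |Real.log u - Real.log v| ≤ B → Φ x u ≤ C * Φ x v

/-- The fibres of `e` cut `S` into dyadic intervals, up to end points; the `i`-th of them contains
the sample point `p i`. -/
structure IsDyadicPartition {ι : Type*} [MeasurableSpace ι] (S : Set ℝ) (e : ℝ → ι) (p : ι → ℝ) :
    Prop where
  measurableSet : MeasurableSet S
  measurable : Measurable e
  exists_cell (i : ι) : ∃ a, 0 < a ∧ p i ∈ Icc a (2 * a) ∧ Ioo a (2 * a) ⊆ e ⁻¹' {i} ∩ S ∧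
    e ⁻¹' {i} ∩ S ⊆ Icc a (2 * a)

section Discretisation

variable {X Y ι : Type*} {q : ℝ≥0∞}

theorem LqNorm_eq_eLpNorm_dlog (hq : q ≠ 0) {S : Set ℝ} (hS : MeasurableSet S) (hS₀ : S ⊆ Ioi 0)
    {g Φ : ℝ → ℝ≥0∞} (h : ∀ u, 0 < u → g u = ENNReal.ofReal (u ^ (-(q⁻¹.toReal))) * Φ u) :
    LqNorm q S g = eLpNorm Φ q (dlog.restrict S) := by
  have hdens : Measurable fun u : ℝ => ENNReal.ofReal u⁻¹ := by fun_prop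
  rw [LqNorm, dlog, restrict_withDensity hS]
  split_ifs with hq'
  · subst hq'
    have hpos : ∀ᵐ u ∂volume.restrict S, ENNReal.ofReal u⁻¹ ≠ 0 :=
      (ae_restrict_mem hS).mono fun u hu => (ofReal_pos.2 (inv_pos.2 (hS₀ hu))).ne'
    rw [eLpNorm_exponent_top, eLpNormEssSup_eq_essSup_enorm]
    refine (essSup_congr_ae ((ae_restrict_mem hS).mono fun u hu => ?_)).trans
      (le_antisymm (essSup_mono_measure (withDensity_absolutelyContinuous' hdens.aemeasurable hpos))
        (essSup_mono_measure (withDensity_absolutelyContinuous _ _)))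
    simpa using h u (hS₀ hu)
  · have hq₀ := toReal_pos hq hq'
    rw [eLpNorm_eq_lintegral_rpow_enorm_toReal hq hq', one_div, toReal_inv,
      lintegral_withDensity_eq_lintegral_mul_non_measurable _ hdens (by simp)]
    congr 1
    refine setLIntegral_congr_fun hS fun u hu => ?_
    have hu₀ : 0 < u := hS₀ hu
    simp only [Pi.mul_apply, enorm_eq_self]
    rw [h u hu₀, ENNReal.mul_rpow_of_nonneg _ _ hq₀.le,
      ENNReal.ofReal_rpow_of_pos (by positivity), ← Real.rpow_mul hu₀.le, toReal_inv, neg_mul,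
      inv_mul_cancel₀ hq₀.ne', Real.rpow_neg_one]

theorem dlog_Ioc {a b : ℝ} (ha : 0 < a) (hab : a ≤ b) :
    dlog (Ioc a b) = ENNReal.ofReal (Real.log (b / a)) := by
  rw [dlog, withDensity_apply _ measurableSet_Ioc, ← ofReal_integral_eq_lintegral_ofReal,
    ← intervalIntegral.integral_of_le hab, integral_inv_of_pos ha (ha.trans_le hab)]
  · exact (intervalIntegrable_iff_integrableOn_Ioc_of_le hab).1
      (intervalIntegral.intervalIntegrable_inv (fun u hu => by grind [uIcc_of_le]) continuousOn_id)
  · exact (ae_restrict_mem measurableSet_Ioc).mono fun u hu => inv_nonneg.2 (ha.trans hu.1).le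

instance : NullSingletonClass dlog :=
  nullSingletonClass_withDensity _

theorem dlog_eq_log_two {A : Set ℝ} {a : ℝ} (ha : 0 < a) (hA : Ioo a (2 * a) ⊆ A)
    (hA' : A ⊆ Icc a (2 * a)) : dlog A = ENNReal.ofReal (Real.log 2) := by
  have hIoc : dlog (Ioc a (2 * a)) = ENNReal.ofReal (Real.log 2) := by
    rw [dlog_Ioc ha (by linarith), mul_div_cancel_right₀ _ ha.ne']
  refine le_antisymm ?_ ?_
  · exact (measure_mono hA').trans_eq (Ioc_ae_eq_Icc.measure_eq.symm.trans hIoc)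
  · exact (Ioo_ae_eq_Ioc.measure_eq.trans hIoc).symm.trans_le (measure_mono hA)

theorem IsDyadicPartition.map_dlog [MeasurableSpace ι] [DiscreteMeasurableSpace ι] [Countable ι]
    {S : Set ℝ} {e : ℝ → ι} {p : ι → ℝ} (h : IsDyadicPartition S e p) :
    Measure.map e (dlog.restrict S) = ENNReal.ofReal (Real.log 2) • Measure.count := by
  refine Measure.ext_of_singleton fun i => ?_
  obtain ⟨a, ha, -, hcell, hcell'⟩ := h.exists_cell i
  rw [Measure.map_apply h.measurable .of_discrete,
    Measure.restrict_apply (h.measurable .of_discrete), dlog_eq_log_two ha hcell hcell',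
    Measure.smul_apply, Measure.count_singleton, smul_eq_mul, mul_one]

theorem abs_log_sub_log_le_log_two {a u v : ℝ} (ha : 0 < a) (hu : u ∈ Icc a (2 * a))
    (hv : v ∈ Icc a (2 * a)) : |Real.log u - Real.log v| ≤ Real.log 2 := by
  have hlog : ∀ x ∈ Icc a (2 * a), Real.log x ∈ Icc (Real.log a) (Real.log 2 + Real.log a) :=
    fun x hx => ⟨Real.log_le_log ha hx.1, by
      rw [← Real.log_mul two_ne_zero ha.ne']; exact Real.log_le_log (ha.trans_le hx.1) hx.2⟩
  have := hlog u hu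
  have := hlog v hv
  grind

theorem IsDyadicPartition.abs_log_sub_log_le [MeasurableSpace ι] {S : Set ℝ} {e : ℝ → ι} {p : ι → ℝ}
    (h : IsDyadicPartition S e p) {u : ℝ} (hu : u ∈ S) :
    0 < u ∧ 0 < p (e u) ∧ |Real.log u - Real.log (p (e u))| ≤ Real.log 2 := by
  obtain ⟨a, ha, hp, -, hcell⟩ := h.exists_cell (e u)
  have hua := hcell ⟨rfl, hu⟩
  exact ⟨ha.trans_le hua.1, ha.trans_le hp.1, abs_log_sub_log_le_log_two ha hua hp⟩

theorem UnifDoubling.eLpNorm_dlog_comparable [MeasurableSpace ι] [DiscreteMeasurableSpace ι]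
    [Countable ι] {Φ : X → ℝ → ℝ≥0∞} (hΦ : UnifDoubling Φ) (q : ℝ≥0∞) {S : X → Set ℝ}
    {e : X → ℝ → ι} {p : X → ι → ℝ} (h : ∀ x, IsDyadicPartition (S x) (e x) (p x)) :
    (fun x => eLpNorm (Φ x) q (dlog.restrict (S x))) ≲≳
      fun x => ellNorm q fun i => Φ x (p x i) := by
  calc (fun x => eLpNorm (Φ x) q (dlog.restrict (S x)))
      ≲≳ fun x => eLpNorm (fun u => Φ x (p x (e x u))) q (dlog.restrict (S x)) := by
        obtain ⟨C, hC, hΦ⟩ := hΦ (Real.log 2)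
        lift C to NNReal using hC
        refine ⟨⟨C, coe_ne_top, fun x => ?_⟩, C, coe_ne_top, fun x => ?_⟩ <;>
          refine eLpNorm_le_nnreal_smul_eLpNorm_of_ae_le_mul'
            ((ae_restrict_mem (h x).measurableSet).mono fun u hu => ?_) q
        all_goals obtain ⟨hu₀, hp₀, hup⟩ := (h x).abs_log_sub_log_le hu
        · exact hΦ x _ _ hu₀ hp₀ hup
        · exact hΦ x _ _ hp₀ hu₀ (by rwa [abs_sub_comm])
    _ ≲≳ fun x =>
        ENNReal.ofReal (Real.log 2) ^ (1 / q).toReal * ellNorm q fun i => Φ x (p x i) := by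
        refine isComparable_of_eq fun x => ?_
        rw [← smul_eq_mul, ← eLpNorm_smul_measure_of_ne_zero (by simp [Real.log_pos]),
          ← (h x).map_dlog, eLpNorm_map_measure .of_discrete (h x).measurable.aemeasurable]
        rfl
    _ ≲≳ fun x => ellNorm q fun i => Φ x (p x i) := by
        have hlog : ENNReal.ofReal (Real.log 2) ≠ 0 := by simp [Real.log_pos]
        have hc : ENNReal.ofReal (Real.log 2) ^ (1 / q).toReal ≠ 0 := by simp [hlog]
        have hc' : ENNReal.ofReal (Real.log 2) ^ (1 / q).toReal ≠ ∞ := by finiteness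
        refine ⟨⟨_, hc', fun x => le_rfl⟩, _, inv_ne_top.2 hc, fun x => ?_⟩
        rw [← mul_assoc, ENNReal.inv_mul_cancel hc hc', one_mul]

theorem isDyadicPartition_Ioi_zero :
    IsDyadicPartition (Ioi 0) (fun u => ⌊Real.logb 2 u⌋) fun k : ℤ => (2 : ℝ) ^ k := by
  refine ⟨measurableSet_Ioi, (Real.measurable_log.div_const _).floor, fun k => ?_⟩
  have hcell (u : ℝ) (hu : 0 < u) : ⌊Real.logb 2 u⌋ = k ↔ (2 : ℝ) ^ k ≤ u ∧ u < 2 * 2 ^ k := by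
    rw [Int.floor_eq_iff, Real.le_logb_iff_rpow_le one_lt_two hu,
      Real.logb_lt_iff_lt_rpow one_lt_two hu, Real.rpow_add_one two_ne_zero,
      Real.rpow_intCast, mul_comm]
  have hk : (0 : ℝ) < 2 ^ k := by positivity
  refine ⟨2 ^ k, hk, ⟨le_rfl, by linarith⟩, fun u hu => ?_, fun u hu => ?_⟩
  · exact ⟨(hcell u (hk.trans hu.1)).2 ⟨hu.1.le, hu.2⟩, hk.trans hu.1⟩
  · exact Ico_subset_Icc_self ((hcell u hu.2).1 hu.1)

theorem natFloor_logb_two_eq_iff {x : ℝ} (hx : 1 < x) (j : ℕ) :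
    ⌊Real.logb 2 x⌋₊ = j ↔ (2 : ℝ) ^ j ≤ x ∧ x < 2 * 2 ^ j := by
  have hx₀ : 0 < x := by linarith
  rw [Nat.floor_eq_iff (Real.logb_nonneg one_lt_two hx.le), Real.le_logb_iff_rpow_le one_lt_two hx₀,
    Real.logb_lt_iff_lt_rpow one_lt_two hx₀, Real.rpow_add_one two_ne_zero, Real.rpow_natCast,
    mul_comm]

theorem isDyadicPartition_Ioi {t : ℝ} (ht : 0 < t) :
    IsDyadicPartition (Ioi t) (fun u => ⌊Real.logb 2 (u / t)⌋₊)
      fun j : ℕ => t * 2 ^ (1 * j : ℤ) := by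
  refine ⟨measurableSet_Ioi, Nat.measurable_floor.comp
    ((Real.measurable_log.comp (measurable_id.div_const t)).div_const _), fun j => ?_⟩
  have hj : (1 : ℝ) ≤ 2 ^ j := one_le_pow₀ one_le_two
  have hcell (u : ℝ) (hu : t < u) :
      ⌊Real.logb 2 (u / t)⌋₊ = j ↔ t * 2 ^ j ≤ u ∧ u < 2 * (t * 2 ^ j) := by
    rw [natFloor_logb_two_eq_iff ((one_lt_div ht).2 hu), le_div_iff₀ ht, div_lt_iff₀ ht, mul_comm t,
      mul_assoc]
  have hle : t ≤ t * 2 ^ j := le_mul_of_one_le_right ht.le hj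
  simp only [one_mul, zpow_natCast]
  refine ⟨t * 2 ^ j, by positivity, ⟨le_rfl, by linarith⟩, fun u hu => ?_, fun u hu => ?_⟩
  · exact ⟨(hcell u (hle.trans_lt hu.1)).2 ⟨hu.1.le, hu.2⟩, hle.trans_lt hu.1⟩
  · exact Ico_subset_Icc_self ((hcell u hu.2).1 hu.1)

theorem isDyadicPartition_Ioo {t : ℝ} (ht : 0 < t) :
    IsDyadicPartition (Ioo 0 t) (fun u => ⌊Real.logb 2 (t / u)⌋₊)
      fun j : ℕ => t * 2 ^ (-1 * j : ℤ) := by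
  refine ⟨measurableSet_Ioo, Nat.measurable_floor.comp
    ((Real.measurable_log.comp (measurable_id.const_div t)).div_const _), fun j => ?_⟩
  have hj : (1 : ℝ) ≤ 2 ^ j := one_le_pow₀ one_le_two
  have hcell (u : ℝ) (hu : 0 < u) (hut : u < t) :
      ⌊Real.logb 2 (t / u)⌋₊ = j ↔ u ≤ t / 2 ^ j ∧ t / 2 ^ j / 2 < u := by
    rw [natFloor_logb_two_eq_iff ((one_lt_div hu).2 hut), le_div_comm₀ (by positivity) hu,
      div_lt_iff₀ hu, div_div, div_lt_iff₀ (by positivity), mul_comm u, mul_comm 2 ((2 : ℝ) ^ j)]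
  have hle : t / 2 ^ j ≤ t := div_le_self ht.le hj
  have hpos : 0 < t / 2 ^ j / 2 := by positivity
  simp only [neg_mul, one_mul, zpow_neg, zpow_natCast, ← div_eq_mul_inv]
  refine ⟨t / 2 ^ j / 2, hpos, ⟨by linarith, by linarith⟩, fun u hu => ?_, fun u hu => ?_⟩
  · rw [mul_div_cancel₀ _ two_ne_zero] at hu
    have hu₀ := hpos.trans hu.1
    have hut := hu.2.trans_le hle
    exact ⟨(hcell u hu₀ hut).2 ⟨hu.2.le, hu.1⟩, hu₀, hut⟩
  · have h := (hcell u hu.2.1 hu.2.2).1 hu.1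
    exact ⟨h.2.le, by linarith⟩

theorem UnifDoubling.comp {Φ : X → ℝ → ℝ≥0∞} (hΦ : UnifDoubling Φ) (f : Y → X) :
    UnifDoubling fun y => Φ (f y) := fun B =>
  let ⟨C, hC, h⟩ := hΦ B
  ⟨C, hC, fun y => h (f y)⟩

theorem UnifDoubling.mul {Φ Ψ : X → ℝ → ℝ≥0∞} (hΦ : UnifDoubling Φ) (hΨ : UnifDoubling Ψ) :
    UnifDoubling fun x u => Φ x u * Ψ x u := by
  intro B
  obtain ⟨C, hC, hΦ⟩ := hΦ B
  obtain ⟨D, hD, hΨ⟩ := hΨ B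
  refine ⟨C * D, by finiteness, fun x u v hu hv huv => ?_⟩
  calc Φ x u * Ψ x u ≤ (C * Φ x v) * (D * Ψ x v) :=
        mul_le_mul' (hΦ x u v hu hv huv) (hΨ x u v hu hv huv)
    _ = C * D * (Φ x v * Ψ x v) := by ring

theorem UnifDoubling.of_comparable {Φ Ψ : X → ℝ → ℝ≥0∞} (hΨ : UnifDoubling Ψ)
    (h : (fun p : X × Ioi (0 : ℝ) => Φ p.1 p.2) ≲≳ fun p => Ψ p.1 p.2) : UnifDoubling Φ := by
  intro B
  obtain ⟨C, hC, hΨ⟩ := hΨ B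
  obtain ⟨⟨D, hD, h⟩, D', hD', h'⟩ := h
  refine ⟨D * C * D', by finiteness, fun x u v hu hv huv => ?_⟩
  calc Φ x u ≤ D * Ψ x u := h (x, ⟨u, hu⟩)
    _ ≤ D * (C * (D' * Φ x v)) := by
        gcongr; exact (hΨ x u v hu hv huv).trans (by gcongr; exact h' (x, ⟨v, hv⟩))
    _ = D * C * D' * Φ x v := by ring

theorem UnifDoubling.ellNorm_smul [MeasurableSpace ι] [DiscreteMeasurableSpace ι] [Countable ι]
    {Φ : X → ℝ → ℝ≥0∞} (hΦ : UnifDoubling Φ) (hq : q ≠ 0) {c : ι → ℝ} (hc : ∀ i, 0 < c i) :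
    UnifDoubling fun x t => ellNorm q fun i => Φ x (t * c i) := by
  intro B
  obtain ⟨C, hC, h⟩ := hΦ B
  refine ⟨C, hC, fun x u v hu hv huv => ?_⟩
  rw [← ellNorm_const_mul hq]
  refine ellNorm_mono fun i => h x _ _ (mul_pos hu (hc i)) (mul_pos hv (hc i)) ?_
  rwa [Real.log_mul hu.ne' (hc i).ne', Real.log_mul hv.ne' (hc i).ne', add_sub_add_right_eq_sub]

theorem UnifDoubling.eLpNorm_Ioi_zero_comparable {Φ : X → ℝ → ℝ≥0∞} (hΦ : UnifDoubling Φ)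
    (q : ℝ≥0∞) :
    (fun x => eLpNorm (Φ x) q (dlog.restrict (Ioi 0))) ≲≳
      fun x => ellNorm q fun k : ℤ => Φ x (2 ^ k) :=
  hΦ.eLpNorm_dlog_comparable q fun _ => isDyadicPartition_Ioi_zero

section Rays

variable {Φ Ψ : X → ℝ → ℝ≥0∞} {R : ℝ → Set ℝ} {e : ℝ → ℝ → ℕ} {s : ℤ}

theorem UnifDoubling.eLpNorm_ray_comparable (hΦ : UnifDoubling Φ) (q : ℝ≥0∞)
    (hR : ∀ t, 0 < t → IsDyadicPartition (R t) (e t) fun j : ℕ => t * 2 ^ (s * j)) :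
    (fun p : X × Ioi (0 : ℝ) => eLpNorm (Φ p.1) q (dlog.restrict (R p.2))) ≲≳
      fun p => ellNorm q fun j : ℕ => Φ p.1 (p.2 * 2 ^ (s * j)) :=
  (hΦ.comp Prod.fst).eLpNorm_dlog_comparable q fun p => hR p.2 p.2.2

theorem UnifDoubling.eLpNorm_ray (hΦ : UnifDoubling Φ) (hq : q ≠ 0)
    (hR : ∀ t, 0 < t → IsDyadicPartition (R t) (e t) fun j : ℕ => t * 2 ^ (s * j)) :
    UnifDoubling fun x t => eLpNorm (Φ x) q (dlog.restrict (R t)) :=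
  (hΦ.ellNorm_smul hq fun j : ℕ => zpow_pos two_pos (s * j)).of_comparable
    (hΦ.eLpNorm_ray_comparable q hR)

theorem UnifDoubling.eLpNorm_ray_comparable_rayNorm (hΦ : UnifDoubling Φ) (q : ℝ≥0∞)
    (hR : ∀ t, 0 < t → IsDyadicPartition (R t) (e t) fun j : ℕ => t * 2 ^ (s * j)) :
    (fun p : X × ℤ => eLpNorm (Φ p.1) q (dlog.restrict (R (2 ^ p.2)))) ≲≳
      fun p => rayNorm q s (fun k => Φ p.1 (2 ^ k)) p.2 := by
  have h := (hΦ.eLpNorm_ray_comparable q hR).comp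
    fun p : X × ℤ => (p.1, ⟨(2 : ℝ) ^ p.2, mem_Ioi.2 (zpow_pos two_pos p.2)⟩)
  simpa only [rayNorm, zpow_add₀ (two_ne_zero' ℝ)] using h

theorem UnifDoubling.eLpNorm_mul_ray_comparable (hΦ : UnifDoubling Φ) (hΨ : UnifDoubling Ψ)
    {r : ℝ≥0∞} (hq : q ≠ 0) (hr : r ≠ 0)
    (hR : ∀ t, 0 < t → IsDyadicPartition (R t) (e t) fun j : ℕ => t * 2 ^ (s * j)) :
    (fun x => eLpNorm (fun t => Ψ x t * eLpNorm (Φ x) q (dlog.restrict (R t))) r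
        (dlog.restrict (Ioi 0))) ≲≳
      fun x => ellNorm r fun k : ℤ => Ψ x (2 ^ k) * rayNorm q s (fun k => Φ x (2 ^ k)) k := by
  refine ((hΨ.mul (hΦ.eLpNorm_ray hq hR)).eLpNorm_Ioi_zero_comparable r).trans (.ellNorm hr ?_)
  exact (IsComparable.refl _).mul (hΦ.eLpNorm_ray_comparable_rayNorm q hR)

end Rays

end Discretisation

/-- `w` is positive on `(0, ∞)` and behaves like `t ^ α` up to factors of arbitrarily small power
growth, expressed on the logarithmic scale. Slowly varying functions have index `0`. -/
structure HasIndex (α : ℝ) (w : ℝ → ℝ) : Prop where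
  pos {u : ℝ} (hu : 0 < u) : 0 < w u
  abs_log_sub_le {ε : ℝ} (hε : 0 < ε) : ∃ c, ∀ u v, 0 < u → 0 < v →
    |Real.log (w u) - Real.log (w v) - α * (Real.log u - Real.log v)| ≤
      c + ε * |Real.log u - Real.log v|

section HasIndex

variable {X : Type*} {α β : ℝ} {w w' ρ : ℝ → ℝ}

theorem HasIndex.of_log_le (hpos : ∀ u, 0 < u → 0 < w u)
    (h : ∀ ε : ℝ, 0 < ε → ∃ c, ∀ u v, 0 < u → 0 < v →
      Real.log (w u) ≤ Real.log (w v) + α * (Real.log u - Real.log v) +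
        (c + ε * |Real.log u - Real.log v|)) : HasIndex α w := by
  refine ⟨fun hu => hpos _ hu, fun {ε} hε => ?_⟩
  obtain ⟨c, h⟩ := h ε hε
  refine ⟨c, fun u v hu hv => abs_le.2 ⟨?_, by linarith [h u v hu hv]⟩⟩
  have := h v u hv hu
  rw [abs_sub_comm] at this
  linarith

theorem log_le_of_equivOn {b g : ℝ → ℝ} (hb : ∀ t ∈ Ioi (0 : ℝ), 0 < b t) (ε : ℝ) {C : ℝ}
    (hC : 0 < C) (h : ∀ t ∈ Ioi (0 : ℝ), C⁻¹ * g t ≤ t ^ ε * b t ∧ t ^ ε * b t ≤ C * g t) {x y : ℝ}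
    (hx : 0 < x) (hy : 0 < y) (hg : g x ≤ g y) :
    Real.log (b x) ≤ Real.log (b y) + 2 * Real.log C + ε * (Real.log y - Real.log x) := by
  have hbx := hb x hx
  have hby := hb y hy
  have hxy : x ^ ε * b x ≤ C * (C * (y ^ ε * b y)) :=
    calc x ^ ε * b x ≤ C * g x := (h x hx).2
      _ ≤ C * g y := by gcongr
      _ ≤ C * (C * (y ^ ε * b y)) := by gcongr; exact (inv_mul_le_iff₀ hC).1 (h y hy).1
  have hlog := Real.log_le_log (by positivity) hxy
  rw [Real.log_mul (by positivity) hbx.ne', Real.log_mul hC.ne' (by positivity),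
    Real.log_mul hC.ne' (by positivity), Real.log_mul (by positivity) hby.ne', Real.log_rpow hx,
    Real.log_rpow hy] at hlog
  linarith

theorem SlowlyVarying.hasIndex {b : ℝ → ℝ} (hb : SlowlyVarying b) : HasIndex 0 b := by
  obtain ⟨-, hpos, h⟩ := hb
  refine .of_log_le hpos fun ε hε => ?_
  obtain ⟨⟨g, hg, C, hC, hCg⟩, g', hg', C', hC', hCg'⟩ := h ε hε
  refine ⟨2 * |Real.log C| + 2 * |Real.log C'|, fun u v hu hv => ?_⟩
  have := le_abs_self (Real.log C)
  have := le_abs_self (Real.log C')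
  rcases le_total u v with huv | huv
  · have := log_le_of_equivOn hpos ε hC hCg hu hv (hg hu hv huv)
    have := mul_le_mul_of_nonneg_left (neg_le_abs (Real.log u - Real.log v)) hε.le
    linarith [abs_nonneg (Real.log C')]
  · have := log_le_of_equivOn hpos (-ε) hC' hCg' hu hv (hg' hv hu huv)
    have := mul_le_mul_of_nonneg_left (le_abs_self (Real.log u - Real.log v)) hε.le
    linarith [abs_nonneg (Real.log C)]

theorem hasIndex_id : HasIndex 1 fun t => t :=
  .of_log_le (fun _ hu => hu) fun ε hε => ⟨0, fun u v _ _ => by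
    have := mul_nonneg hε.le (abs_nonneg (Real.log u - Real.log v))
    linarith⟩

theorem HasIndex.mul (h : HasIndex α w) (h' : HasIndex β w') :
    HasIndex (α + β) fun t => w t * w' t := by
  refine ⟨fun hu => mul_pos (h.pos hu) (h'.pos hu), fun {ε} hε => ?_⟩
  obtain ⟨c, hc⟩ := h.abs_log_sub_le (half_pos hε)
  obtain ⟨c', hc'⟩ := h'.abs_log_sub_le (half_pos hε)
  refine ⟨c + c', fun u v hu hv => ?_⟩
  rw [Real.log_mul (h.pos hu).ne' (h'.pos hu).ne', Real.log_mul (h.pos hv).ne' (h'.pos hv).ne']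
  calc _ = |(Real.log (w u) - Real.log (w v) - α * (Real.log u - Real.log v)) +
        (Real.log (w' u) - Real.log (w' v) - β * (Real.log u - Real.log v))| := by congr 1; ring
    _ ≤ (c + ε / 2 * |Real.log u - Real.log v|) + (c' + ε / 2 * |Real.log u - Real.log v|) :=
        (abs_add_le _ _).trans (add_le_add (hc u v hu hv) (hc' u v hu hv))
    _ = c + c' + ε * |Real.log u - Real.log v| := by ring

theorem HasIndex.comp (h : HasIndex α w) (hρ : HasIndex β ρ) :
    HasIndex (α * β) fun t => w (ρ t) := by
  refine ⟨fun hu => h.pos (hρ.pos hu), fun {ε} hε => ?_⟩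
  obtain ⟨c, hc⟩ := h.abs_log_sub_le (ε := ε / (2 * (|β| + 1))) (by positivity)
  obtain ⟨d, hd⟩ := hρ.abs_log_sub_le (ε := min 1 (ε / (2 * (|α| + 1)))) (by positivity)
  refine ⟨c + (ε / (2 * (|β| + 1)) + |α|) * d, fun u v hu hv => ?_⟩
  set D := Real.log u - Real.log v
  set P := Real.log (ρ u) - Real.log (ρ v)
  have hα : |α| * (ε / (2 * (|α| + 1))) ≤ ε / 2 := by
    rw [mul_div, div_le_div_iff₀ (by positivity) two_pos]; nlinarith [abs_nonneg α]
  have hP : |P - β * D| ≤ d + min 1 (ε / (2 * (|α| + 1))) * |D| := hd u v hu hv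
  have hP' : |P| ≤ d + (|β| + 1) * |D| := by
    have := abs_add_le (P - β * D) (β * D)
    rw [sub_add_cancel, abs_mul] at this
    have := mul_le_mul_of_nonneg_right (min_le_left 1 (ε / (2 * (|α| + 1)))) (abs_nonneg D)
    linarith
  calc |Real.log (w (ρ u)) - Real.log (w (ρ v)) - α * β * D|
      = |Real.log (w (ρ u)) - Real.log (w (ρ v)) - α * P + α * (P - β * D)| := by congr 1; ring
    _ ≤ c + ε / (2 * (|β| + 1)) * |P| + |α| * |P - β * D| := by
        rw [← abs_mul]
        exact (abs_add_le _ _).trans (add_le_add_left (hc _ _ (hρ.pos hu) (hρ.pos hv)) _)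
    _ ≤ c + ε / (2 * (|β| + 1)) * (d + (|β| + 1) * |D|) +
          |α| * (d + ε / (2 * (|α| + 1)) * |D|) := by
        gcongr
        exact hP.trans (by gcongr; exact min_le_right _ _)
    _ = c + (ε / (2 * (|β| + 1)) + |α|) * d + ε / 2 * |D| + |α| * (ε / (2 * (|α| + 1))) * |D| := by
        field_simp; ring
    _ ≤ c + (ε / (2 * (|β| + 1)) + |α|) * d + ε / 2 * |D| + ε / 2 * |D| := by gcongr
    _ = c + (ε / (2 * (|β| + 1)) + |α|) * d + ε * |D| := by ring

theorem hasIndex_rpow (p : ℝ) : HasIndex p fun t => t ^ p := by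
  refine .of_log_le (fun u hu => Real.rpow_pos_of_pos hu p) fun ε hε => ⟨0, fun u v hu hv => ?_⟩
  rw [Real.log_rpow hu, Real.log_rpow hv]
  have := mul_nonneg hε.le (abs_nonneg (Real.log u - Real.log v))
  linarith

theorem HasIndex.inv (h : HasIndex α w) : HasIndex (-α) fun t => (w t)⁻¹ := by
  simpa only [Real.rpow_neg_one, neg_one_mul] using (hasIndex_rpow (-1)).comp h

theorem HasIndex.div (h : HasIndex α w) (h' : HasIndex β w') :
    HasIndex (α - β) fun t => w t / w' t := by
  simpa only [div_eq_mul_inv, sub_eq_add_neg] using h.mul h'.inv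

theorem HasIndex.ofReal_le (h : HasIndex α w) {ε : ℝ} (hε : 0 < ε) :
    ∃ c, ∀ u v, 0 < u → 0 < v → ENNReal.ofReal (w u) ≤ ENNReal.ofReal
      (Real.exp (c + α * (Real.log u - Real.log v) + ε * |Real.log u - Real.log v|)) *
        ENNReal.ofReal (w v) := by
  obtain ⟨c, hc⟩ := h.abs_log_sub_le hε
  refine ⟨c, fun u v hu hv => ?_⟩
  rw [← ENNReal.ofReal_mul (Real.exp_nonneg _)]
  refine ENNReal.ofReal_le_ofReal ?_
  have hlog := (abs_le.1 (hc u v hu hv)).2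
  calc w u = Real.exp (Real.log (w u)) := (Real.exp_log (h.pos hu)).symm
    _ ≤ Real.exp (c + α * (Real.log u - Real.log v) + ε * |Real.log u - Real.log v| +
          Real.log (w v)) := Real.exp_le_exp.2 (by linarith)
    _ = _ := by rw [Real.exp_add, Real.exp_log (h.pos hv)]

theorem HasIndex.unifDoubling (h : HasIndex α w) :
    UnifDoubling fun (_ : X) u => ENNReal.ofReal (w u) := by
  intro B
  obtain ⟨c, hc⟩ := h.ofReal_le one_pos
  refine ⟨ENNReal.ofReal (Real.exp (c + |α| * B + 1 * B)), by finiteness, fun _ u v hu hv huv => ?_⟩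
  have hα : α * (Real.log u - Real.log v) ≤ |α| * B :=
    (le_abs_self _).trans ((abs_mul _ _).trans_le (by gcongr))
  exact (hc u v hu hv).trans
    (mul_le_mul_left (ENNReal.ofReal_le_ofReal (Real.exp_le_exp.2 (by linarith))) _)

/-- The samples of a weight at the dyadic points `2 ^ k`. -/
def dyadicSample (w : ℝ → ℝ) (k : ℤ) : ℝ≥0∞ :=
  ENNReal.ofReal (w (2 ^ k))

theorem dyadicSample_mul (hw : HasIndex α w) (v : ℝ → ℝ) (k : ℤ) :
    dyadicSample (fun t => w t * v t) k = dyadicSample w k * dyadicSample v k :=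
  ENNReal.ofReal_mul (hw.pos (by positivity)).le

theorem HasIndex.decaysAlong (h : HasIndex α w) {s : ℤ} (hs : s * α < 0) :
    DecaysAlong s (dyadicSample w) := by
  have hlog := Real.log_pos one_lt_two
  set ε := -(s * α) / (2 * (|(s : ℝ)| + 1))
  have hε₀ : 0 < ε := div_pos (by linarith) (by positivity)
  have hδ : s * α + ε * |(s : ℝ)| < 0 := by
    have : ε * (2 * (|(s : ℝ)| + 1)) = -(s * α) := div_mul_cancel₀ _ (by positivity)
    nlinarith
  obtain ⟨c, hc⟩ := h.ofReal_le hε₀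
  refine ⟨ENNReal.ofReal (Real.exp c), by finiteness,
    ENNReal.ofReal (Real.exp ((s * α + ε * |(s : ℝ)|) * Real.log 2)), ?_, fun k j => ?_⟩
  · rw [ENNReal.ofReal_lt_one, Real.exp_lt_one_iff]
    exact mul_neg_of_neg_of_pos hδ hlog
  · refine (hc (2 ^ (k + s * j)) (2 ^ k) (by positivity) (by positivity)).trans_eq
      (congrArg (· * ENNReal.ofReal (w (2 ^ k))) ?_)
    rw [← ENNReal.ofReal_pow (Real.exp_nonneg _), ← Real.exp_nat_mul,
      ← ENNReal.ofReal_mul (Real.exp_nonneg _), ← Real.exp_add, Real.log_zpow, Real.log_zpow]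
    congr 2
    push_cast
    rw [← sub_mul, add_sub_cancel_left, abs_mul, abs_mul, abs_of_pos hlog, Nat.abs_cast]
    ring

end HasIndex

section ChangeOfVariable

variable {X : Type*} {α β κ c : ℝ} {L : ℤ → ℝ} {ρ σ : ℝ → ℝ} {Ψ : X → ℝ → ℝ≥0∞}

theorem exists_abs_sub_le_of_coarse_linear (hκ : 0 < κ)
    (h : ∀ k l : ℤ, |L k - L l - κ * (k - l)| ≤ c + κ / 2 * |(k : ℝ) - l|) :
    ∃ B, ∀ y : ℝ, ∃ j : ℤ, |y - L j| ≤ B := by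
  refine ⟨c + 3 / 2 * κ, fun y => ?_⟩
  have hbdd : ∀ j : ℤ, L j ≤ y → j ≤ max 0 ⌈2 * (y - L 0 + c) / κ⌉ := fun j hj => by
    rcases le_total j 0 with hj₀ | hj₀
    · exact hj₀.trans (le_max_left _ _)
    · have := (abs_le.1 (h j 0)).1
      rw [Int.cast_zero, sub_zero, abs_of_nonneg (Int.cast_nonneg hj₀)] at this
      have hj' : (j : ℝ) ≤ 2 * (y - L 0 + c) / κ := (le_div_iff₀ hκ).2 (by linarith)
      exact (Int.cast_le.1 (hj'.trans (Int.le_ceil _))).trans (le_max_right _ _)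
  have hne : ∃ j : ℤ, L j ≤ y := by
    obtain ⟨n, hn⟩ := exists_nat_ge (2 * (L 0 + c - y) / κ)
    rw [div_le_iff₀ hκ] at hn
    have := (abs_le.1 (h (-n) 0)).2
    push_cast at this
    rw [sub_zero, abs_neg, Nat.abs_cast] at this
    exact ⟨-n, by linarith⟩
  obtain ⟨j, hj, hmax⟩ := Int.exists_greatest_of_bdd ⟨_, hbdd⟩ hne
  have hy : y < L (j + 1) := not_le.1 fun h => by linarith [hmax _ h]
  have hstep := (abs_le.1 (h (j + 1) j)).2
  push_cast at hstep
  rw [add_sub_cancel_left, abs_one] at hstep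
  exact ⟨j, abs_le.2 ⟨by linarith, by linarith⟩⟩

theorem encard_fiber_le_of_coarse_linear (hκ : 0 < κ)
    (h : ∀ k l : ℤ, |L k - L l - κ * (k - l)| ≤ c + κ / 2 * |(k : ℝ) - l|) (B : ℝ) :
    ∃ N : ℕ, ∀ e : ℤ → ℤ, (∀ k l, e k = e l → |L k - L l| ≤ B) →
      ∀ j, (e ⁻¹' {j}).encard ≤ N := by
  obtain ⟨M, hM⟩ := exists_nat_ge (2 * (B + c) / κ)
  rw [div_le_iff₀ hκ] at hM
  refine ⟨2 * M + 1, fun e he j => ?_⟩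
  obtain hempty | ⟨l, hl⟩ := (e ⁻¹' {j}).eq_empty_or_nonempty
  · simp [hempty]
  have hsub : e ⁻¹' {j} ⊆ Icc (l - M) (l + M) := fun k hk => by
    have hdist : κ * |(k : ℝ) - l| ≤ B + (c + κ / 2 * |(k : ℝ) - l|) :=
      calc κ * |(k : ℝ) - l| = |(L k - L l) - (L k - L l - κ * (k - l))| := by
            rw [_root_.sub_sub_cancel, abs_mul, abs_of_pos hκ]
        _ ≤ _ := (abs_sub _ _).trans (add_le_add (he k l (hk.trans hl.symm)) (h k l))
    have hkl : |(k : ℝ) - l| ≤ M := le_of_mul_le_mul_right (by linarith) hκ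
    have hkl' : |k - l| ≤ M := by exact_mod_cast hkl
    exact ⟨by linarith [(abs_le.1 hkl').1], by linarith [(abs_le.1 hkl').2]⟩
  calc (e ⁻¹' {j}).encard ≤ (Icc (l - M) (l + M)).encard := encard_le_encard hsub
    _ = (2 * M + 1 : ℕ) := by
      rw [← Finset.coe_Icc, encard_coe_eq_coe_finsetCard, Int.card_Icc]
      congr 1
      omega

theorem HasIndex.coarse_linear_log_zpow (h : HasIndex α ρ) (hα : 0 < α) :
    ∃ c, ∀ k l : ℤ, |Real.log (ρ (2 ^ k)) - Real.log (ρ (2 ^ l)) - α * Real.log 2 * (k - l)| ≤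
      c + α * Real.log 2 / 2 * |(k : ℝ) - l| := by
  obtain ⟨c, hc⟩ := h.abs_log_sub_le (half_pos hα)
  refine ⟨c, fun k l => ?_⟩
  have hkl := hc (2 ^ k) (2 ^ l) (by positivity) (by positivity)
  rw [Real.log_zpow, Real.log_zpow, ← sub_mul, abs_mul, abs_of_pos (Real.log_pos one_lt_two)] at hkl
  calc _ = |Real.log (ρ (2 ^ k)) - Real.log (ρ (2 ^ l)) - α * ((k - l) * Real.log 2)| := by
        congr 1; ring
    _ ≤ _ := hkl.trans_eq (by ring)

theorem UnifDoubling.ellNorm_comp_dominated (hΨ : UnifDoubling Ψ) {r : ℝ≥0∞} (hr : r ≠ 0)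
    (hρ : HasIndex α ρ) (hα : 0 < α) (hσ : HasIndex β σ) (hβ : 0 < β) :
    (fun x => ellNorm r fun k : ℤ => Ψ x (ρ (2 ^ k))) ≲
      fun x => ellNorm r fun k : ℤ => Ψ x (σ (2 ^ k)) := by
  have hlog := Real.log_pos one_lt_two
  obtain ⟨c, hc⟩ := hσ.coarse_linear_log_zpow hβ
  obtain ⟨B, hB⟩ := exists_abs_sub_le_of_coarse_linear (mul_pos hβ hlog) hc
  choose e he using fun k : ℤ => hB (Real.log (ρ (2 ^ k)))
  obtain ⟨d, hd⟩ := hρ.coarse_linear_log_zpow hα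
  obtain ⟨N, hN⟩ := encard_fiber_le_of_coarse_linear (mul_pos hα hlog) hd (B + B)
  have hfiber : ∀ j, (e ⁻¹' {j}).encard ≤ N := hN e fun k l hkl => by
    have hl := he l
    rw [abs_sub_comm, ← hkl] at hl
    exact (abs_sub_le _ _ _).trans (add_le_add (he k) hl)
  obtain ⟨C, hC, h⟩ := hΨ B
  calc (fun x => ellNorm r fun k : ℤ => Ψ x (ρ (2 ^ k)))
      ≲ fun x => ellNorm r fun k : ℤ => Ψ x (σ (2 ^ e k)) :=
        .ellNorm hr ⟨C, hC, fun p => h p.1 (ρ (2 ^ p.2)) (σ (2 ^ e p.2)) (hρ.pos (by positivity))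
          (hσ.pos (by positivity)) (he p.2)⟩
    _ ≲ fun x => ellNorm r fun j : ℤ => Ψ x (σ (2 ^ j)) :=
        ⟨(N : ℝ≥0∞) ^ (1 / r).toReal, by finiteness,
          fun x => ellNorm_comp_le_of_encard_fiber_le hfiber fun j : ℤ => Ψ x (σ (2 ^ j))⟩

theorem UnifDoubling.ellNorm_comp_comparable (hΨ : UnifDoubling Ψ) {r : ℝ≥0∞} (hr : r ≠ 0)
    (hρ : HasIndex α ρ) (hα : 0 < α) :
    (fun x => ellNorm r fun k : ℤ => Ψ x (2 ^ k)) ≲≳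
      fun x => ellNorm r fun k : ℤ => Ψ x (ρ (2 ^ k)) :=
  ⟨hΨ.ellNorm_comp_dominated (ρ := fun t => t) hr hasIndex_id one_pos hρ hα,
    hΨ.ellNorm_comp_dominated (σ := fun t => t) hr hρ hα hasIndex_id one_pos⟩

end ChangeOfVariable

section RayWeight

variable {α : ℝ} {w : ℝ → ℝ} {φ : ℝ → ℝ≥0∞} {r : ℝ≥0∞} {R : ℝ → Set ℝ} {e : ℝ → ℝ → ℕ} {s : ℤ}

theorem HasIndex.of_ofReal_le (hφ₀ : ∀ u, 0 < u → φ u ≠ 0) (hφ : ∀ u, 0 < u → φ u ≠ ∞)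
    (h : ∀ ε : ℝ, 0 < ε → ∃ c, ∀ u v, 0 < u → 0 < v → φ u ≤ ENNReal.ofReal
      (Real.exp (c + α * (Real.log u - Real.log v) + ε * |Real.log u - Real.log v|)) * φ v) :
    HasIndex α fun u => (φ u).toReal := by
  have hpos (u : ℝ) (hu : 0 < u) : 0 < (φ u).toReal := toReal_pos (hφ₀ u hu) (hφ u hu)
  refine .of_log_le hpos fun ε hε => ?_
  obtain ⟨c, hc⟩ := h ε hε
  refine ⟨c, fun u v hu hv => ?_⟩
  have hle := ENNReal.toReal_mono (mul_ne_top ofReal_ne_top (hφ v hv)) (hc u v hu hv)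
  rw [ENNReal.toReal_mul, ENNReal.toReal_ofReal (Real.exp_nonneg _)] at hle
  have hlog := Real.log_le_log (hpos u hu) hle
  rw [Real.log_mul (Real.exp_ne_zero _) (hpos v hv).ne', Real.log_exp] at hlog
  linarith

theorem HasIndex.eLpNorm_ray_le (hw : HasIndex α w) (hr : r ≠ 0)
    (hR : ∀ t, 0 < t → IsDyadicPartition (R t) (e t) fun j : ℕ => t * 2 ^ (s * j)) {ε : ℝ}
    (hε : 0 < ε) : ∃ c, ∀ u v, 0 < u → 0 < v →
      eLpNorm (fun t => ENNReal.ofReal (w t)) r (dlog.restrict (R u)) ≤ ENNReal.ofReal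
        (Real.exp (c + α * (Real.log u - Real.log v) + ε * |Real.log u - Real.log v|)) *
          eLpNorm (fun t => ENNReal.ofReal (w t)) r (dlog.restrict (R v)) := by
  obtain ⟨c, hc⟩ := hw.ofReal_le hε
  obtain ⟨⟨C, hC, h⟩, D, hD, h'⟩ :=
    (hw.unifDoubling (X := Unit)).eLpNorm_ray_comparable r hR
  refine ⟨c + Real.log (C.toReal * D.toReal + 1), fun u v hu hv => ?_⟩
  have hCD : C * D ≤ ENNReal.ofReal (Real.exp (Real.log (C.toReal * D.toReal + 1))) := by
    rw [Real.exp_log (by positivity), ← ENNReal.toReal_mul]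
    exact (ENNReal.le_ofReal_iff_toReal_le (by finiteness) (by positivity)).2 (by linarith)
  set δ := α * (Real.log u - Real.log v) + ε * |Real.log u - Real.log v| with hδ
  have hell : (ellNorm r fun j : ℕ => ENNReal.ofReal (w (u * 2 ^ (s * j)))) ≤
      ENNReal.ofReal (Real.exp (c + δ)) *
        ellNorm r fun j : ℕ => ENNReal.ofReal (w (v * 2 ^ (s * j))) := by
    rw [← ellNorm_const_mul hr]
    refine ellNorm_mono fun j => ?_
    have hj := hc (u * 2 ^ (s * j)) (v * 2 ^ (s * j)) (by positivity) (by positivity)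
    rwa [Real.log_mul hu.ne' (by positivity), Real.log_mul hv.ne' (by positivity),
      add_sub_add_right_eq_sub, add_assoc] at hj
  calc _ ≤ C * ellNorm r fun j : ℕ => ENNReal.ofReal (w (u * 2 ^ (s * j))) := h ((), ⟨u, hu⟩)
    _ ≤ C * (ENNReal.ofReal (Real.exp (c + δ)) *
          (D * eLpNorm (fun t => ENNReal.ofReal (w t)) r (dlog.restrict (R v)))) := by
        gcongr
        exact hell.trans (by gcongr; exact h' ((), ⟨v, hv⟩))
    _ = C * D * ENNReal.ofReal (Real.exp (c + δ)) *
          eLpNorm (fun t => ENNReal.ofReal (w t)) r (dlog.restrict (R v)) := by ring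
    _ ≤ _ := by
        gcongr
        refine (mul_le_mul_left hCD _).trans_eq ?_
        rw [← ENNReal.ofReal_mul (Real.exp_nonneg _), ← Real.exp_add, hδ]
        congr 2
        ring

theorem HasIndex.le_eLpNorm_ray (hw : HasIndex α w) (hr : r ≠ 0)
    (hR : ∀ t, 0 < t → IsDyadicPartition (R t) (e t) fun j : ℕ => t * 2 ^ (s * j)) :
    (fun t : Ioi (0 : ℝ) => ENNReal.ofReal (w t)) ≲
      fun t => eLpNorm (fun u => ENNReal.ofReal (w u)) r (dlog.restrict (R t)) := by
  refine IsDominated.trans (isDominated_of_le fun t => ?_)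
    (((hw.unifDoubling (X := Unit)).eLpNorm_ray_comparable r hR).2.comp fun t => ((), t))
  simpa using le_ellNorm hr (fun j : ℕ => ENNReal.ofReal (w (t * 2 ^ (s * j)))) 0

theorem HasIndex.toReal_eLpNorm_ray (hw : HasIndex α w) (hr : r ≠ 0)
    (hR : ∀ t, 0 < t → IsDyadicPartition (R t) (e t) fun j : ℕ => t * 2 ^ (s * j))
    (hfin : eLpNorm (fun u => ENNReal.ofReal (w u)) r (dlog.restrict (R 1)) ≠ ∞) :
    (∀ t, 0 < t → eLpNorm (fun u => ENNReal.ofReal (w u)) r (dlog.restrict (R t)) ≠ ∞) ∧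
      HasIndex α fun t =>
        (eLpNorm (fun u => ENNReal.ofReal (w u)) r (dlog.restrict (R t))).toReal := by
  have hne_top (t : ℝ) (ht : 0 < t) :
      eLpNorm (fun u => ENNReal.ofReal (w u)) r (dlog.restrict (R t)) ≠ ∞ := by
    obtain ⟨c, hc⟩ := hw.eLpNorm_ray_le hr hR one_pos
    exact ne_top_of_le_ne_top (by finiteness) (hc t 1 ht one_pos)
  refine ⟨hne_top, .of_ofReal_le (fun t ht h₀ => ?_) hne_top fun ε hε => hw.eLpNorm_ray_le hr hR hε⟩
  obtain ⟨C, -, hC⟩ := hw.le_eLpNorm_ray hr hR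
  have := hC ⟨t, ht⟩
  beta_reduce at this
  rw [h₀, mul_zero, nonpos_iff_eq_zero, ENNReal.ofReal_eq_zero] at this
  exact this.not_gt (hw.pos ht)

end RayWeight

/-- `N` is an extended-real-valued quasi-norm on the additive group `G`, in the weak sense without
homogeneity and definiteness. -/
structure IsQuasinorm {G : Type*} [AddCommGroup G] (N : G → ℝ≥0∞) : Prop where
  map_zero : N 0 = 0
  map_neg (x : G) : N (-x) = N x
  add_dominated : (fun p : G × G => N (p.1 + p.2)) ≲ fun p => N p.1 + N p.2

theorem QuasiBanach.isQuasinorm (A : QuasiBanach E) : IsQuasinorm A.N where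
  map_zero := A.zero
  map_neg x := by simpa using A.smul (-1) x
  add_dominated :=
    let ⟨C, _, hC, h⟩ := A.quasi
    ⟨C, hC, fun p => h p.1 p.2⟩

section KFunctional

variable {G : Type*} [AddCommGroup G] {N₀ N₁ N₀' N₁' : G → ℝ≥0∞}

theorem Kf_le_left (h₁ : IsQuasinorm N₁) (t : ℝ) (f : G) : Kf N₀ N₁ t f ≤ N₀ f :=
  (iInf_le _ f).trans_eq (by rw [sub_self, h₁.map_zero, mul_zero, add_zero])

theorem Kf_le_right (h₀ : IsQuasinorm N₀) (t : ℝ) (f : G) :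
    Kf N₀ N₁ t f ≤ ENNReal.ofReal t * N₁ f :=
  (iInf_le _ 0).trans_eq (by rw [sub_zero, h₀.map_zero, zero_add])

theorem Kf_neg (h₀ : IsQuasinorm N₀) (h₁ : IsQuasinorm N₁) (t : ℝ) (f : G) :
    Kf N₀ N₁ t (-f) = Kf N₀ N₁ t f :=
  (Equiv.neg G).iInf_congr fun g => by
    rw [Equiv.neg_apply, h₀.map_neg, ← h₁.map_neg (-f - g), neg_sub, sub_neg_eq_add, sub_neg_eq_add,
      add_comm f]

theorem Kf_add_dominated (h₀ : IsQuasinorm N₀) (h₁ : IsQuasinorm N₁) :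
    (fun p : (G × G) × ℝ => Kf N₀ N₁ p.2 (p.1.1 + p.1.2)) ≲
      fun p => Kf N₀ N₁ p.2 p.1.1 + Kf N₀ N₁ p.2 p.1.2 := by
  obtain ⟨C, hC, h₀⟩ := h₀.add_dominated
  obtain ⟨D, hD, h₁⟩ := h₁.add_dominated
  have hCD : C + D ≠ ∞ := by finiteness
  refine ⟨C + D, hCD, fun ⟨⟨f, g⟩, t⟩ => ?_⟩
  simp only [Kf, ENNReal.iInf_add, ENNReal.add_iInf, ENNReal.mul_iInf fun h => absurd h hCD]
  refine le_iInf₂ fun y x => (iInf_le _ (x + y)).trans ?_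
  rw [add_sub_add_comm]
  calc N₀ (x + y) + ENNReal.ofReal t * N₁ (f - x + (g - y))
      ≤ (C + D) * (N₀ x + N₀ y) + ENNReal.ofReal t * ((C + D) * (N₁ (f - x) + N₁ (g - y))) := by
        gcongr
        · exact (h₀ (x, y)).trans (by gcongr; exact le_self_add)
        · exact (h₁ (f - x, g - y)).trans (by gcongr; exact le_add_self)
    _ = _ := by ring

theorem Kf_sub_dominated (h₀ : IsQuasinorm N₀) (h₁ : IsQuasinorm N₁) :
    (fun p : (G × G) × ℝ => Kf N₀ N₁ p.2 (p.1.1 - p.1.2)) ≲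
      fun p => Kf N₀ N₁ p.2 p.1.1 + Kf N₀ N₁ p.2 p.1.2 := by
  simpa only [sub_eq_add_neg, Kf_neg h₀ h₁] using
    (Kf_add_dominated h₀ h₁).comp fun p : (G × G) × ℝ => ((p.1.1, -p.1.2), p.2)

theorem Kf_dominated (h₀ : N₀ ≲ N₀') (h₁ : N₁ ≲ N₁') :
    (fun p : G × ℝ => Kf N₀ N₁ p.2 p.1) ≲ fun p => Kf N₀' N₁' p.2 p.1 :=
  .iInf <| ((isDominated_of_le fun p : (G × ℝ) × G => iInf_le _ p.2).trans <|
    (h₀.comp Prod.snd).add ((IsDominated.refl _).mul (h₁.comp fun p : (G × ℝ) × G => p.1.1 - p.2)))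

theorem Kf_comparable (h₀ : N₀ ≲≳ N₀') (h₁ : N₁ ≲≳ N₁') :
    (fun p : G × ℝ => Kf N₀ N₁ p.2 p.1) ≲≳ fun p => Kf N₀' N₁' p.2 p.1 :=
  ⟨Kf_dominated h₀.1 h₁.1, Kf_dominated h₀.2 h₁.2⟩

theorem unifDoubling_Kf (N₀ N₁ : G → ℝ≥0∞) : UnifDoubling fun f t => Kf N₀ N₁ t f := by
  intro B
  have hC : 1 + ENNReal.ofReal (Real.exp B) ≠ ∞ := by finiteness
  refine ⟨_, hC, fun f u v hu hv huv => ?_⟩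
  have huv' : u ≤ Real.exp B * v := by
    rw [← Real.log_le_log_iff hu (by positivity), Real.log_mul (Real.exp_ne_zero B) hv.ne',
      Real.log_exp]
    linarith [(abs_le.1 huv).2]
  simp only [Kf, ENNReal.mul_iInf fun h => absurd h hC]
  refine iInf_mono fun g => ?_
  rw [mul_add, ← mul_assoc]
  gcongr
  · exact le_mul_of_one_le_left zero_le le_self_add
  · refine (ENNReal.ofReal_le_ofReal huv').trans ?_
    rw [ENNReal.ofReal_mul (Real.exp_nonneg B)]
    gcongr
    exact le_add_self

end KFunctional

section RayDomination

variable {X : Type*} {q : ℝ≥0∞} {s : ℤ} {W : ℤ → ℝ≥0∞} {c : X → ℝ≥0∞} {x y z : X → ℤ → ℝ≥0∞}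

theorem rayNorm_dominated_add (hq : q ≠ 0) (s : ℤ)
    (h : (fun p : X × ℤ => x p.1 p.2) ≲ fun p => y p.1 p.2 + z p.1 p.2) :
    (fun p : X × ℤ => rayNorm q s (x p.1) p.2) ≲
      fun p => rayNorm q s (y p.1) p.2 + rayNorm q s (z p.1) p.2 :=
  (IsDominated.rayNorm hq s (y := fun a k => y a k + z a k) h).trans
    ((ellNorm_add_le q).comp fun p : X × ℤ => (fun j : ℕ => y p.1 (p.2 + s * j),
      fun j : ℕ => z p.1 (p.2 + s * j)))

theorem DecaysAlong.rayNorm_dominated_mul (hW : DecaysAlong s W) (hq : q ≠ 0)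
    (h : (fun p : X × ℤ => x p.1 p.2) ≲ fun p => W p.2 * c p.1) :
    (fun p : X × ℤ => rayNorm q s (x p.1) p.2) ≲ fun p => W p.2 * c p.1 := by
  refine (IsDominated.rayNorm hq s (y := fun a k => W k * c a) h).trans
    (.trans (isDominated_of_le fun p => ?_) (((hW.rayNorm_dominated hq).comp Prod.snd).mul
      (.refl fun p : X × ℤ => c p.1)))
  exact (ellNorm_mul_const hq _ _).le

end RayDomination

section Holmstedt

variable {G : Type*} [AddCommGroup G] {N₀ N₁ : G → ℝ≥0∞} {q r q₁ r₀ r₁ : ℝ≥0∞}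
  {V V₀ V₁ β w : ℤ → ℝ≥0∞} {ρ : ℤ → ℝ}

/-- The sequence `V k * K(2 ^ k, f)` of dyadic samples of a weighted K-functional. -/
def sampledK (N₀ N₁ : G → ℝ≥0∞) (V : ℤ → ℝ≥0∞) (f : G) (k : ℤ) : ℝ≥0∞ :=
  V k * Kf N₀ N₁ (2 ^ k) f

/-- The discrete counterpart of `normK`. -/
def discreteNormK (N₀ N₁ : G → ℝ≥0∞) (q : ℝ≥0∞) (V : ℤ → ℝ≥0∞) (f : G) : ℝ≥0∞ :=
  ellNorm q (sampledK N₀ N₁ V f)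

/-- The discrete counterpart of `normR`, with outer weight `β` and inner weight `V`. -/
def discreteNormR (N₀ N₁ : G → ℝ≥0∞) (r q : ℝ≥0∞) (β V : ℤ → ℝ≥0∞) (f : G) : ℝ≥0∞ :=
  ellNorm r fun k => β k * rayNorm q 1 (sampledK N₀ N₁ V f) k

/-- The quantity minimised over `g` in `K(2 ^ k, f)`, as a function of `((f, g), k)`. -/
def splitCost (N₀ N₁ : G → ℝ≥0∞) (p : (G × G) × ℤ) : ℝ≥0∞ :=
  N₀ p.1.2 + ENNReal.ofReal (2 ^ p.2) * N₁ (p.1.1 - p.1.2)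

theorem sampledK_add_dominated (h₀ : IsQuasinorm N₀) (h₁ : IsQuasinorm N₁) (V : ℤ → ℝ≥0∞) :
    (fun p : (G × G) × ℤ => sampledK N₀ N₁ V (p.1.1 + p.1.2) p.2) ≲
      fun p => sampledK N₀ N₁ V p.1.1 p.2 + sampledK N₀ N₁ V p.1.2 p.2 := by
  simpa only [sampledK, mul_add] using (IsDominated.refl fun p : (G × G) × ℤ => V p.2).mul
    ((Kf_add_dominated h₀ h₁).comp fun p : (G × G) × ℤ => (p.1, (2 : ℝ) ^ p.2))

theorem sampledK_sub_dominated (h₀ : IsQuasinorm N₀) (h₁ : IsQuasinorm N₁) (V : ℤ → ℝ≥0∞) :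
    (fun p : (G × G) × ℤ => sampledK N₀ N₁ V (p.1.1 - p.1.2) p.2) ≲
      fun p => sampledK N₀ N₁ V p.1.1 p.2 + sampledK N₀ N₁ V p.1.2 p.2 := by
  simpa only [sampledK, mul_add] using (IsDominated.refl fun p : (G × G) × ℤ => V p.2).mul
    ((Kf_sub_dominated h₀ h₁).comp fun p : (G × G) × ℤ => (p.1, (2 : ℝ) ^ p.2))

theorem rayNorm_sampledK_dominated_left (h₁ : IsQuasinorm N₁) (hq : q ≠ 0) (hV : DecaysAlong s V) :
    (fun p : G × ℤ => rayNorm q s (sampledK N₀ N₁ V p.1) p.2) ≲ fun p => V p.2 * N₀ p.1 :=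
  hV.rayNorm_dominated_mul hq (isDominated_of_le fun p => mul_le_mul_right (Kf_le_left h₁ _ p.1) _)

theorem rayNorm_sampledK_dominated_right (h₀ : IsQuasinorm N₀) (hq : q ≠ 0)
    (hV : DecaysAlong s fun k => V k * ENNReal.ofReal (2 ^ k)) :
    (fun p : G × ℤ => rayNorm q s (sampledK N₀ N₁ V p.1) p.2) ≲
      fun p => V p.2 * ENNReal.ofReal (2 ^ p.2) * N₁ p.1 :=
  hV.rayNorm_dominated_mul hq (isDominated_of_le fun p =>
    (mul_le_mul_right (Kf_le_right h₀ _ p.1) _).trans_eq (mul_assoc _ _ _).symm)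

theorem rayNorm_sampledK_dominated_splitCost_left (h₁ : IsQuasinorm N₁) (hq : q ≠ 0)
    (hV : DecaysAlong s V) :
    (fun p : (G × G) × ℤ => rayNorm q s (sampledK N₀ N₁ V p.1.2) p.2) ≲
      fun p => V p.2 * splitCost N₀ N₁ p :=
  ((rayNorm_sampledK_dominated_left h₁ hq hV).comp fun p : (G × G) × ℤ => (p.1.2, p.2)).trans
    (isDominated_of_le fun _ => mul_le_mul_right le_self_add _)

theorem rayNorm_sampledK_dominated_splitCost_right (h₀ : IsQuasinorm N₀) (hq : q ≠ 0)
    (hV : DecaysAlong s fun k => V k * ENNReal.ofReal (2 ^ k)) :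
    (fun p : (G × G) × ℤ => rayNorm q s (sampledK N₀ N₁ V (p.1.1 - p.1.2)) p.2) ≲
      fun p => V p.2 * splitCost N₀ N₁ p :=
  ((rayNorm_sampledK_dominated_right h₀ hq hV).comp
    fun p : (G × G) × ℤ => (p.1.1 - p.1.2, p.2)).trans
    (isDominated_of_le fun _ => (mul_assoc _ _ _).trans_le (mul_le_mul_right le_add_self _))

theorem rayNorm_sampledK_sub_dominated (h₀ : IsQuasinorm N₀) (h₁ : IsQuasinorm N₁) (hq : q ≠ 0)
    (s : ℤ) (V : ℤ → ℝ≥0∞) :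
    (fun p : (G × G) × ℤ => rayNorm q s (sampledK N₀ N₁ V (p.1.1 - p.1.2)) p.2) ≲ fun p =>
      rayNorm q s (sampledK N₀ N₁ V p.1.1) p.2 + rayNorm q s (sampledK N₀ N₁ V p.1.2) p.2 :=
  rayNorm_dominated_add (X := G × G) (x := fun a => sampledK N₀ N₁ V (a.1 - a.2))
    (y := fun a => sampledK N₀ N₁ V a.1) (z := fun a => sampledK N₀ N₁ V a.2) hq s
    (sampledK_sub_dominated h₀ h₁ V)

theorem discreteNormK_left_dominated (h₀ : IsQuasinorm N₀) (h₁ : IsQuasinorm N₁) (hq : q ≠ 0)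
    (hV : DecaysAlong 1 V) (hV' : DecaysAlong (-1) fun k => V k * ENNReal.ofReal (2 ^ k)) :
    (fun p : (G × G) × ℤ => discreteNormK N₀ N₁ q V p.1.2) ≲
      fun p => rayNorm q (-1) (sampledK N₀ N₁ V p.1.1) p.2 + V p.2 * splitCost N₀ N₁ p := by
  have hsub : (fun p : (G × G) × ℤ =>
      rayNorm q (-1) (sampledK N₀ N₁ V (p.1.1 - (p.1.1 - p.1.2))) p.2) ≲
      fun p => rayNorm q (-1) (sampledK N₀ N₁ V p.1.1) p.2 +
        rayNorm q (-1) (sampledK N₀ N₁ V (p.1.1 - p.1.2)) p.2 :=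
    (rayNorm_sampledK_sub_dominated h₀ h₁ hq (-1) V).comp
        fun p : (G × G) × ℤ => ((p.1.1, p.1.1 - p.1.2), p.2)
  simp only [_root_.sub_sub_cancel] at hsub
  calc (fun p : (G × G) × ℤ => discreteNormK N₀ N₁ q V p.1.2)
      ≲ fun p => rayNorm q (-1) (sampledK N₀ N₁ V p.1.2) p.2 +
          rayNorm q 1 (sampledK N₀ N₁ V p.1.2) p.2 :=
        (ellNorm_dominated_rayNorm q).comp fun p : (G × G) × ℤ => (sampledK N₀ N₁ V p.1.2, p.2)
    _ ≲ fun p => rayNorm q (-1) (sampledK N₀ N₁ V p.1.1) p.2 + V p.2 * splitCost N₀ N₁ p := .add_le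
        (hsub.trans
          ((IsDominated.refl _).add (rayNorm_sampledK_dominated_splitCost_right h₀ hq hV')))
        ((rayNorm_sampledK_dominated_splitCost_left h₁ hq hV).trans
          (isDominated_of_le fun _ => le_add_self))

theorem discreteNormK_sub_dominated (h₀ : IsQuasinorm N₀) (h₁ : IsQuasinorm N₁) (hq : q ≠ 0)
    (hV : DecaysAlong 1 V) (hV' : DecaysAlong (-1) fun k => V k * ENNReal.ofReal (2 ^ k)) :
    (fun p : (G × G) × ℤ => discreteNormK N₀ N₁ q V (p.1.1 - p.1.2)) ≲
      fun p => rayNorm q 1 (sampledK N₀ N₁ V p.1.1) p.2 + V p.2 * splitCost N₀ N₁ p := by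
  calc (fun p : (G × G) × ℤ => discreteNormK N₀ N₁ q V (p.1.1 - p.1.2))
      ≲ fun p => rayNorm q (-1) (sampledK N₀ N₁ V (p.1.1 - p.1.2)) p.2 +
          rayNorm q 1 (sampledK N₀ N₁ V (p.1.1 - p.1.2)) p.2 :=
        (ellNorm_dominated_rayNorm q).comp
          fun p : (G × G) × ℤ => (sampledK N₀ N₁ V (p.1.1 - p.1.2), p.2)
    _ ≲ fun p => rayNorm q 1 (sampledK N₀ N₁ V p.1.1) p.2 + V p.2 * splitCost N₀ N₁ p := .add_le
        ((rayNorm_sampledK_dominated_splitCost_right h₀ hq hV').trans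
          (isDominated_of_le fun _ => le_add_self))
        ((rayNorm_sampledK_sub_dominated h₀ h₁ hq 1 V).trans
          ((IsDominated.refl _).add (rayNorm_sampledK_dominated_splitCost_left h₁ hq hV)))

theorem rayNorm_mul_rayNorm_sampledK_dominated_splitCost (h₁ : IsQuasinorm N₁) (hq : q ≠ 0)
    (hr : r ≠ 0) (hV : DecaysAlong 1 V) (hβV : DecaysAlong 1 fun k => β k * V k) :
    (fun p : (G × G) × ℤ =>
      rayNorm r 1 (fun i => β i * rayNorm q 1 (sampledK N₀ N₁ V p.1.2) i) p.2) ≲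
      fun p => β p.2 * V p.2 * splitCost N₀ N₁ p := by
  have hpoint : (fun p : G × ℤ => β p.2 * rayNorm q 1 (sampledK N₀ N₁ V p.1) p.2) ≲
      fun p => β p.2 * V p.2 * N₀ p.1 := by
    simpa only [mul_assoc] using (IsDominated.refl fun p : G × ℤ => β p.2).mul
      (rayNorm_sampledK_dominated_left h₁ hq hV)
  have hray : (fun p : G × ℤ =>
      rayNorm r 1 (fun i => β i * rayNorm q 1 (sampledK N₀ N₁ V p.1) i) p.2) ≲
      fun p => β p.2 * V p.2 * N₀ p.1 :=
    hβV.rayNorm_dominated_mul (c := N₀)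
      (x := fun f i => β i * rayNorm q 1 (sampledK N₀ N₁ V f) i) hr hpoint
  exact (hray.comp fun p : (G × G) × ℤ => (p.1.2, p.2)).trans
    (isDominated_of_le fun _ => mul_le_mul_right le_self_add _)

theorem rayNorm_mul_rayNorm_sampledK_sub_dominated (h₀ : IsQuasinorm N₀) (h₁ : IsQuasinorm N₁)
    (hq : q ≠ 0) (hr : r ≠ 0) (V β : ℤ → ℝ≥0∞) :
    (fun p : (G × G) × ℤ =>
      rayNorm r 1 (fun i => β i * rayNorm q 1 (sampledK N₀ N₁ V (p.1.1 - p.1.2)) i) p.2) ≲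
      fun p => rayNorm r 1 (fun i => β i * rayNorm q 1 (sampledK N₀ N₁ V p.1.1) i) p.2 +
        rayNorm r 1 (fun i => β i * rayNorm q 1 (sampledK N₀ N₁ V p.1.2) i) p.2 := by
  refine rayNorm_dominated_add (X := G × G)
    (x := fun a i => β i * rayNorm q 1 (sampledK N₀ N₁ V (a.1 - a.2)) i)
    (y := fun a i => β i * rayNorm q 1 (sampledK N₀ N₁ V a.1) i)
    (z := fun a i => β i * rayNorm q 1 (sampledK N₀ N₁ V a.2) i) hr 1 ?_
  simpa only [mul_add] using (IsDominated.refl fun p : (G × G) × ℤ => β p.2).mul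
    (rayNorm_sampledK_sub_dominated h₀ h₁ hq 1 V)

theorem discreteNormR_sub_dominated (h₀ : IsQuasinorm N₀) (h₁ : IsQuasinorm N₁) (hq : q ≠ 0)
    (hr : r ≠ 0) (hV : DecaysAlong 1 V)
    (hV' : DecaysAlong (-1) fun k => V k * ENNReal.ofReal (2 ^ k))
    (hβV : DecaysAlong 1 fun k => β k * V k) :
    (fun p : (G × G) × ℤ => discreteNormR N₀ N₁ r q β V (p.1.1 - p.1.2)) ≲ fun p =>
      rayNorm r (-1) β p.2 *
        (rayNorm q 1 (sampledK N₀ N₁ V p.1.1) p.2 + V p.2 * splitCost N₀ N₁ p) +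
      rayNorm r 1 (fun i => β i * rayNorm q 1 (sampledK N₀ N₁ V p.1.1) i) p.2 := by
  have hleft : (fun p : (G × G) × ℤ =>
      rayNorm r (-1) (fun i => β i * rayNorm q 1 (sampledK N₀ N₁ V (p.1.1 - p.1.2)) i) p.2) ≲
      fun p => rayNorm r (-1) β p.2 *
        (rayNorm q 1 (sampledK N₀ N₁ V p.1.1) p.2 + V p.2 * splitCost N₀ N₁ p) := by
    refine IsDominated.trans (isDominated_of_le fun p => ?_)
      ((IsDominated.refl fun p : (G × G) × ℤ => rayNorm r (-1) β p.2).mul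
        (discreteNormK_sub_dominated h₀ h₁ hq hV hV'))
    exact (ellNorm_mono fun j => mul_le_mul_right (rayNorm_le_ellNorm one_ne_zero q _ _) _).trans_eq
      (ellNorm_mul_const hr _ _)
  have hright : (fun p : (G × G) × ℤ =>
      rayNorm r 1 (fun i => β i * rayNorm q 1 (sampledK N₀ N₁ V (p.1.1 - p.1.2)) i) p.2) ≲
      fun p => rayNorm r 1 (fun i => β i * rayNorm q 1 (sampledK N₀ N₁ V p.1.1) i) p.2 +
        β p.2 * V p.2 * splitCost N₀ N₁ p :=
    (rayNorm_mul_rayNorm_sampledK_sub_dominated h₀ h₁ hq hr V β).trans ((IsDominated.refl _).add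
      (rayNorm_mul_rayNorm_sampledK_dominated_splitCost h₁ hq hr hV hβV))
  refine ((ellNorm_dominated_rayNorm r).comp fun p : (G × G) × ℤ =>
    (fun i => β i * rayNorm q 1 (sampledK N₀ N₁ V (p.1.1 - p.1.2)) i, p.2)).trans (.add_le
      (hleft.trans (isDominated_of_le fun _ => le_self_add))
      (hright.trans (isDominated_of_le fun p => ?_)))
  rw [add_comm, mul_assoc]
  gcongr
  exacts [le_rayNorm hr _ _ _, le_add_self]

/-- A weight for which `discreteNormK` is strictly between its two endpoint spaces. -/
structure IsInteriorWeight (V : ℤ → ℝ≥0∞) : Prop where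
  ne_top (k : ℤ) : V k ≠ ∞
  decays : DecaysAlong 1 V
  decays_mul : DecaysAlong (-1) fun k => V k * ENNReal.ofReal (2 ^ k)

theorem rayNorm_mul_sampledK_le_discreteNormR (hq : q ≠ 0) (hr : r ≠ 0) (β V : ℤ → ℝ≥0∞) (f : G)
    (k : ℤ) : rayNorm r (-1) β k * sampledK N₀ N₁ V f k ≤ discreteNormR N₀ N₁ r q β V f := by
  refine le_trans ?_ (rayNorm_le_ellNorm (s := -1) (by decide) r
    (fun i => β i * rayNorm q 1 (sampledK N₀ N₁ V f) i) k)
  rw [rayNorm, ← ellNorm_mul_const hr]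
  refine ellNorm_mono fun j => mul_le_mul_right ?_ _
  calc sampledK N₀ N₁ V f k ≤ rayNorm q 1 (sampledK N₀ N₁ V f) k := le_rayNorm hq 1 _ k
    _ = rayNorm q 1 (sampledK N₀ N₁ V f) (k + -1 * j + 1 * j) := by congr 1; ring
    _ ≤ rayNorm q 1 (sampledK N₀ N₁ V f) (k + -1 * j) := rayNorm_add_le q 1 _ _ j

theorem rayNorm_sampledK_dominated_discreteNormR (hq₁ : q₁ ≠ 0) (hr₀ : r₀ ≠ 0) (hr₁ : r₁ ≠ 0)
    (hρ : DecaysAlong (-1) fun k => ENNReal.ofReal (ρ k))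
    (hV : V₀ ≲ fun k => ENNReal.ofReal (ρ k) * (rayNorm r₁ (-1) β k * V₁ k)) :
    (fun p : G × ℤ => rayNorm r₀ (-1) (sampledK N₀ N₁ V₀ p.1) p.2) ≲
      fun p => ENNReal.ofReal (ρ p.2) * discreteNormR N₀ N₁ r₁ q₁ β V₁ p.1 := by
  refine hρ.rayNorm_dominated_mul (x := sampledK N₀ N₁ V₀)
    (c := discreteNormR N₀ N₁ r₁ q₁ β V₁) hr₀ ?_
  refine ((hV.comp Prod.snd).mul
    (.refl fun p : G × ℤ => Kf N₀ N₁ (2 ^ p.2) p.1)).trans (isDominated_of_le fun p => ?_)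
  rw [mul_assoc, mul_assoc]
  gcongr
  exact rayNorm_mul_sampledK_le_discreteNormR hq₁ hr₁ β V₁ p.1 p.2

theorem rayNorm_sampledK_dominated_Kf (h₀ : IsQuasinorm N₀) (h₁ : IsQuasinorm N₁)
    (hq₁ : q₁ ≠ 0) (hr₀ : r₀ ≠ 0) (hr₁ : r₁ ≠ 0)
    (hρ : DecaysAlong (-1) fun k => ENNReal.ofReal (ρ k))
    (hV : V₀ ≲ fun k => ENNReal.ofReal (ρ k) * (rayNorm r₁ (-1) β k * V₁ k)) :
    (fun p : G × ℤ => rayNorm r₀ (-1) (sampledK N₀ N₁ V₀ p.1) p.2) ≲ fun p =>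
      Kf (discreteNormK N₀ N₁ r₀ V₀) (discreteNormR N₀ N₁ r₁ q₁ β V₁) (ρ p.2) p.1 := by
  have hadd : (fun p : (G × G) × ℤ => rayNorm r₀ (-1) (sampledK N₀ N₁ V₀ (p.1.1 + p.1.2)) p.2) ≲
      fun p => rayNorm r₀ (-1) (sampledK N₀ N₁ V₀ p.1.1) p.2 +
        rayNorm r₀ (-1) (sampledK N₀ N₁ V₀ p.1.2) p.2 :=
    rayNorm_dominated_add (X := G × G) (x := fun a => sampledK N₀ N₁ V₀ (a.1 + a.2))
      (y := fun a => sampledK N₀ N₁ V₀ a.1) (z := fun a => sampledK N₀ N₁ V₀ a.2) hr₀ (-1)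
      (sampledK_add_dominated h₀ h₁ V₀)
  have hsplit : (fun p : (G × ℤ) × G =>
      rayNorm r₀ (-1) (sampledK N₀ N₁ V₀ (p.2 + (p.1.1 - p.2))) p.1.2) ≲ fun p =>
      rayNorm r₀ (-1) (sampledK N₀ N₁ V₀ p.2) p.1.2 +
        rayNorm r₀ (-1) (sampledK N₀ N₁ V₀ (p.1.1 - p.2)) p.1.2 :=
    hadd.comp fun p : (G × ℤ) × G => ((p.2, p.1.1 - p.2), p.1.2)
  simp only [add_sub_cancel] at hsplit
  refine .iInf (F := fun (p : G × ℤ) g => discreteNormK N₀ N₁ r₀ V₀ g +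
    ENNReal.ofReal (ρ p.2) * discreteNormR N₀ N₁ r₁ q₁ β V₁ (p.1 - g)) (hsplit.trans (.add
      (isDominated_of_le fun p => rayNorm_le_ellNorm (by decide) r₀ _ _) ?_))
  exact (rayNorm_sampledK_dominated_discreteNormR hq₁ hr₀ hr₁ hρ hV).comp
    fun p : (G × ℤ) × G => (p.1.1 - p.2, p.1.2)

theorem Kf_dominated_rayNorm_sampledK (h₀ : IsQuasinorm N₀) (h₁ : IsQuasinorm N₁)
    (hq₁ : q₁ ≠ 0) (hr₀ : r₀ ≠ 0) (hr₁ : r₁ ≠ 0) (hV₀ : IsInteriorWeight V₀)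
    (hV₁ : IsInteriorWeight V₁) (hβV₁ : DecaysAlong 1 fun k => β k * V₁ k)
    (hV : (fun k => ENNReal.ofReal (ρ k) * (rayNorm r₁ (-1) β k * V₁ k)) ≲ V₀) :
    (fun p : G × ℤ =>
      Kf (discreteNormK N₀ N₁ r₀ V₀) (discreteNormR N₀ N₁ r₁ q₁ β V₁) (ρ p.2) p.1) ≲ fun p =>
      rayNorm r₀ (-1) (sampledK N₀ N₁ V₀ p.1) p.2 +
        ENNReal.ofReal (ρ p.2) *
          (rayNorm r₁ (-1) β p.2 * rayNorm q₁ 1 (sampledK N₀ N₁ V₁ p.1) p.2 +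
            rayNorm r₁ 1 (fun i => β i * rayNorm q₁ 1 (sampledK N₀ N₁ V₁ p.1) i) p.2) := by
  set H : G × ℤ → ℝ≥0∞ := fun p => rayNorm r₀ (-1) (sampledK N₀ N₁ V₀ p.1) p.2
  set R : G × ℤ → ℝ≥0∞ := fun p => ENNReal.ofReal (ρ p.2) *
    (rayNorm r₁ (-1) β p.2 * rayNorm q₁ 1 (sampledK N₀ N₁ V₁ p.1) p.2 +
      rayNorm r₁ 1 (fun i => β i * rayNorm q₁ 1 (sampledK N₀ N₁ V₁ p.1) i) p.2)
  have hleft : (fun p : (G × G) × ℤ => discreteNormK N₀ N₁ r₀ V₀ p.1.2) ≲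
      fun p => H (p.1.1, p.2) + R (p.1.1, p.2) + V₀ p.2 * splitCost N₀ N₁ p :=
    (discreteNormK_left_dominated h₀ h₁ hr₀ hV₀.decays hV₀.decays_mul).trans
      (isDominated_of_le fun p => by gcongr; exact le_self_add)
  have hright : (fun p : (G × G) × ℤ =>
      ENNReal.ofReal (ρ p.2) * discreteNormR N₀ N₁ r₁ q₁ β V₁ (p.1.1 - p.1.2)) ≲
      fun p => H (p.1.1, p.2) + R (p.1.1, p.2) + V₀ p.2 * splitCost N₀ N₁ p := by
    refine IsDominated.trans (.mul (.refl fun p : (G × G) × ℤ => ENNReal.ofReal (ρ p.2))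
      (discreteNormR_sub_dominated h₀ h₁ hq₁ hr₁ hV₁.decays hV₁.decays_mul hβV₁)) ?_
    calc _ ≲ fun p : (G × G) × ℤ => R (p.1.1, p.2) +
          ENNReal.ofReal (ρ p.2) * (rayNorm r₁ (-1) β p.2 * V₁ p.2) * splitCost N₀ N₁ p :=
          isDominated_of_le fun p => le_of_eq (by ring)
      _ ≲ fun p => H (p.1.1, p.2) + R (p.1.1, p.2) + V₀ p.2 * splitCost N₀ N₁ p :=
          .add (isDominated_of_le fun _ => le_add_self) ((hV.comp Prod.snd).mul (.refl _))
  have hinf : (fun p : G × ℤ =>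
      Kf (discreteNormK N₀ N₁ r₀ V₀) (discreteNormR N₀ N₁ r₁ q₁ β V₁) (ρ p.2) p.1) ≲ fun p =>
      ⨅ g, (H p + R p + V₀ p.2 * splitCost N₀ N₁ ((p.1, g), p.2)) :=
    .iInf (F := fun (p : G × ℤ) g => H p + R p + V₀ p.2 * splitCost N₀ N₁ ((p.1, g), p.2))
      (.trans (isDominated_of_le fun p : (G × ℤ) × G => iInf_le _ p.2)
        ((hleft.add_le hright).comp fun p : (G × ℤ) × G => ((p.1.1, p.2), p.1.2)))
  refine hinf.trans ((isDominated_of_le fun p => ?_).trans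
    (.add_le (.refl fun p : G × ℤ => H p + R p) (isDominated_of_le fun p : G × ℤ =>
      (le_rayNorm hr₀ (-1) (sampledK N₀ N₁ V₀ p.1) p.2).trans le_self_add)))
  rw [← ENNReal.add_iInf, ← ENNReal.mul_iInf fun h => absurd h (hV₀.ne_top _)]
  rfl

theorem ellNorm_mul_sampledK_dominated (hr : r ≠ 0) (hr₀ : r₀ ≠ 0)
    (hV : (fun k => ENNReal.ofReal (ρ k) * (rayNorm r₁ (-1) β k * V₁ k)) ≲ V₀) :
    (fun f => ellNorm r fun k =>
      w k * ENNReal.ofReal (ρ k) * rayNorm r₁ (-1) β k * sampledK N₀ N₁ V₁ f k) ≲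
      fun f => ellNorm r fun k => w k * rayNorm r₀ (-1) (sampledK N₀ N₁ V₀ f) k := by
  refine .ellNorm hr ?_
  calc (fun p : G × ℤ =>
        w p.2 * ENNReal.ofReal (ρ p.2) * rayNorm r₁ (-1) β p.2 * sampledK N₀ N₁ V₁ p.1 p.2)
      ≲ fun p => w p.2 * (ENNReal.ofReal (ρ p.2) * (rayNorm r₁ (-1) β p.2 * V₁ p.2) *
          Kf N₀ N₁ (2 ^ p.2) p.1) :=
        isDominated_of_le fun p => le_of_eq (by rw [sampledK]; ring)
    _ ≲ fun p => w p.2 * (V₀ p.2 * Kf N₀ N₁ (2 ^ p.2) p.1) :=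
        (IsDominated.refl _).mul ((hV.comp Prod.snd).mul (.refl _))
    _ ≲ fun p => w p.2 * rayNorm r₀ (-1) (sampledK N₀ N₁ V₀ p.1) p.2 :=
        isDominated_of_le fun p => mul_le_mul_right (le_rayNorm hr₀ _ _ _) _

theorem ellNorm_Kf_dominated (h₀ : IsQuasinorm N₀) (h₁ : IsQuasinorm N₁) (hr : r ≠ 0)
    (hq₁ : q₁ ≠ 0) (hr₀ : r₀ ≠ 0) (hr₁ : r₁ ≠ 0) (hV₀ : IsInteriorWeight V₀)
    (hV₁ : IsInteriorWeight V₁) (hβV₁ : DecaysAlong 1 fun k => β k * V₁ k)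
    (hwρ : DecaysAlong (-1) fun k => w k * ENNReal.ofReal (ρ k))
    (hwρβ : DecaysAlong (-1) fun k => w k * ENNReal.ofReal (ρ k) * rayNorm r₁ (-1) β k)
    (hV : (fun k => ENNReal.ofReal (ρ k) * (rayNorm r₁ (-1) β k * V₁ k)) ≲ V₀) :
    (fun f => ellNorm r fun k =>
      w k * Kf (discreteNormK N₀ N₁ r₀ V₀) (discreteNormR N₀ N₁ r₁ q₁ β V₁) (ρ k) f) ≲
      fun f => ellNorm r fun k => w k * rayNorm r₀ (-1) (sampledK N₀ N₁ V₀ f) k := by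
  set H : G → ℝ≥0∞ := fun f => ellNorm r fun k => w k * rayNorm r₀ (-1) (sampledK N₀ N₁ V₀ f) k
  set T : G → ℤ → ℝ≥0∞ := fun f => rayNorm q₁ 1 (sampledK N₀ N₁ V₁ f)
  have hT : (fun f => ellNorm r fun k => w k * ENNReal.ofReal (ρ k) * rayNorm r₁ (-1) β k * T f k) ≲
      H :=
    ((hardy_rayNorm hwρβ hq₁ hr).comp (sampledK N₀ N₁ V₁)).trans
      (ellNorm_mul_sampledK_dominated hr hr₀ hV)
  have hR : (fun f => ellNorm r fun k =>
      w k * ENNReal.ofReal (ρ k) * rayNorm r₁ 1 (fun i => β i * T f i) k) ≲ H := by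
    refine ((hardy_rayNorm hwρ hr₁ hr).comp fun f i => β i * T f i).trans
      ((isDominated_of_le fun f => ellNorm_mono fun k => ?_).trans hT)
    rw [← mul_assoc]
    gcongr
    exact le_rayNorm hr₁ _ _ _
  have hTR : (fun f => ellNorm r
      ((fun k => w k * ENNReal.ofReal (ρ k) * rayNorm r₁ (-1) β k * T f k) +
        fun k => w k * ENNReal.ofReal (ρ k) * rayNorm r₁ 1 (fun i => β i * T f i) k)) ≲ H :=
    ((ellNorm_add_le r).comp fun f : G => (_, _)).trans (hT.add_le hR)
  have hpoint := (IsDominated.refl fun p : G × ℤ => w p.2).mul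
    (Kf_dominated_rayNorm_sampledK h₀ h₁ hq₁ hr₀ hr₁ hV₀ hV₁ hβV₁ hV)
  refine (IsDominated.ellNorm (y := fun f =>
      (fun k => w k * rayNorm r₀ (-1) (sampledK N₀ N₁ V₀ f) k) +
        ((fun k => w k * ENNReal.ofReal (ρ k) * rayNorm r₁ (-1) β k * T f k) +
          fun k => w k * ENNReal.ofReal (ρ k) * rayNorm r₁ 1 (fun i => β i * T f i) k)) hr
    (hpoint.trans (isDominated_of_le fun p => le_of_eq ?_))).trans
    (((ellNorm_add_le r).comp fun f : G => (_, _)).trans (IsDominated.add_le (.refl _) hTR))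
  simp only [Pi.add_apply]
  ring

theorem ellNorm_Kf_comparable (h₀ : IsQuasinorm N₀) (h₁ : IsQuasinorm N₁) (hr : r ≠ 0)
    (hq₁ : q₁ ≠ 0) (hr₀ : r₀ ≠ 0) (hr₁ : r₁ ≠ 0) (hV₀ : IsInteriorWeight V₀)
    (hV₁ : IsInteriorWeight V₁) (hβV₁ : DecaysAlong 1 fun k => β k * V₁ k)
    (hρ : DecaysAlong (-1) fun k => ENNReal.ofReal (ρ k))
    (hwρ : DecaysAlong (-1) fun k => w k * ENNReal.ofReal (ρ k))
    (hwρβ : DecaysAlong (-1) fun k => w k * ENNReal.ofReal (ρ k) * rayNorm r₁ (-1) β k)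
    (hV : (fun k => ENNReal.ofReal (ρ k) * (rayNorm r₁ (-1) β k * V₁ k)) ≲≳ V₀) :
    (fun f => ellNorm r fun k =>
      w k * Kf (discreteNormK N₀ N₁ r₀ V₀) (discreteNormR N₀ N₁ r₁ q₁ β V₁) (ρ k) f) ≲≳
      fun f => ellNorm r fun k => w k * rayNorm r₀ (-1) (sampledK N₀ N₁ V₀ f) k :=
  ⟨ellNorm_Kf_dominated h₀ h₁ hr hq₁ hr₀ hr₁ hV₀ hV₁ hβV₁ hwρ hwρβ hV.1,
    .ellNorm hr ((IsDominated.refl fun p : G × ℤ => w p.2).mul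
      (rayNorm_sampledK_dominated_Kf h₀ h₁ hq₁ hr₀ hr₁ hρ hV.2))⟩

end Holmstedt

section SampledNorms

variable {G : Type*} [AddCommGroup G] {α β : ℝ} {a b : ℝ → ℝ} {q r : ℝ≥0∞}

theorem LqNorm_rpow_mul_eq_eLpNorm_dlog (hq : q ≠ 0) {S : Set ℝ} (hS : MeasurableSet S)
    (hS₀ : S ⊆ Ioi 0) (θ : ℝ) (b : ℝ → ℝ) (Φ : ℝ → ℝ≥0∞) :
    LqNorm q S (fun u => ENNReal.ofReal (u ^ (-θ - q⁻¹.toReal) * b u) * Φ u) =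
      eLpNorm (fun u => ENNReal.ofReal (u ^ (-θ) * b u) * Φ u) q (dlog.restrict S) := by
  refine LqNorm_eq_eLpNorm_dlog hq hS hS₀ fun u hu => ?_
  rw [sub_eq_neg_add, Real.rpow_add hu, mul_assoc, ENNReal.ofReal_mul (by positivity), mul_assoc]

theorem HasIndex.unifDoubling_mul_Kf (hb : HasIndex α b) (N₀ N₁ : G → ℝ≥0∞) (θ : ℝ) :
    UnifDoubling fun f u => ENNReal.ofReal (u ^ (-θ) * b u) * Kf N₀ N₁ u f :=
  ((hasIndex_rpow (-θ)).mul hb).unifDoubling.mul (unifDoubling_Kf N₀ N₁)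

theorem HasIndex.normK_comparable (hb : HasIndex α b) (hq : q ≠ 0) (N₀ N₁ : G → ℝ≥0∞) (θ : ℝ) :
    normK N₀ N₁ θ q b ≲≳ discreteNormK N₀ N₁ q (dyadicSample fun t => t ^ (-θ) * b t) :=
  (isComparable_of_eq fun f =>
    LqNorm_rpow_mul_eq_eLpNorm_dlog hq measurableSet_Ioi subset_rfl θ b fun u => Kf N₀ N₁ u f).trans
    ((hb.unifDoubling_mul_Kf N₀ N₁ θ).eLpNorm_Ioi_zero_comparable q)

theorem LqNorm_mul_ray_eq_eLpNorm_dlog (hq : q ≠ 0) (hr : r ≠ 0) {R : ℝ → Set ℝ}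
    (hR : ∀ t, 0 < t → MeasurableSet (R t) ∧ R t ⊆ Ioi 0) (σ : ℝ) (a c : ℝ → ℝ) (Φ : ℝ → ℝ≥0∞) :
    LqNorm r (Ioi 0) (fun t => ENNReal.ofReal (t ^ (-(r⁻¹.toReal)) * c t) *
      LqNorm q (R t) fun u => ENNReal.ofReal (u ^ (-σ - q⁻¹.toReal) * a u) * Φ u) =
      eLpNorm (fun t => ENNReal.ofReal (c t) *
        eLpNorm (fun u => ENNReal.ofReal (u ^ (-σ) * a u) * Φ u) q (dlog.restrict (R t))) r
        (dlog.restrict (Ioi 0)) := by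
  refine LqNorm_eq_eLpNorm_dlog hr measurableSet_Ioi subset_rfl fun t ht => ?_
  rw [LqNorm_rpow_mul_eq_eLpNorm_dlog hq (hR t ht).1 (hR t ht).2,
    ENNReal.ofReal_mul (by positivity), mul_assoc]

theorem HasIndex.normR_comparable (ha : HasIndex α a) (hb : HasIndex β b) (hq : q ≠ 0) (hr : r ≠ 0)
    (N₀ N₁ : G → ℝ≥0∞) (σ : ℝ) :
    normR N₀ N₁ σ r q b a ≲≳ discreteNormR N₀ N₁ r q (dyadicSample fun t => b t / a t)
      (dyadicSample fun t => t ^ (-σ) * a t) :=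
  (isComparable_of_eq fun f => LqNorm_mul_ray_eq_eLpNorm_dlog hq hr
    (fun _ ht => ⟨measurableSet_Ioi, Ioi_subset_Ioi ht.le⟩) σ a (fun t => b t / a t)
      fun u => Kf N₀ N₁ u f).trans
    ((ha.unifDoubling_mul_Kf N₀ N₁ σ).eLpNorm_mul_ray_comparable (hb.div ha).unifDoubling hq hr
      fun _ => isDyadicPartition_Ioi)

theorem HasIndex.normL_comparable (ha : HasIndex α a) (hb : HasIndex β b) (hq : q ≠ 0) (hr : r ≠ 0)
    (N₀ N₁ : G → ℝ≥0∞) (σ : ℝ) :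
    normL N₀ N₁ σ r q b a ≲≳ fun f => ellNorm r fun k => dyadicSample (fun t => b t / a t) k *
      rayNorm q (-1) (sampledK N₀ N₁ (dyadicSample fun t => t ^ (-σ) * a t) f) k :=
  (isComparable_of_eq fun f => LqNorm_mul_ray_eq_eLpNorm_dlog hq hr
    (fun _ _ => ⟨measurableSet_Ioo, Ioo_subset_Ioi_self⟩) σ a (fun t => b t / a t)
      fun u => Kf N₀ N₁ u f).trans
    ((ha.unifDoubling_mul_Kf N₀ N₁ σ).eLpNorm_mul_ray_comparable (hb.div ha).unifDoubling hq hr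
      fun _ => isDyadicPartition_Ioo)

theorem HasIndex.isInteriorWeight {V : ℝ → ℝ} (hV : HasIndex α V) (hα : -1 < α) (hα₀ : α < 0) :
    IsInteriorWeight (dyadicSample V) where
  ne_top _ := ofReal_ne_top
  decays := hV.decaysAlong (by push_cast; linarith)
  decays_mul := by
    have h := (hV.mul hasIndex_id).decaysAlong (s := -1) (by push_cast; linarith)
    rwa [funext (dyadicSample_mul hV fun t => t)] at h

end SampledNorms

section Interpolation

variable {G : Type*} [AddCommGroup G] {N₀ N₁ : G → ℝ≥0∞} {q₁ r r₀ r₁ : ℝ≥0∞}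
  {α₀ α₁ γ δ : ℝ} {V₀ V₁ β Λ ρ w : ℝ → ℝ}

theorem ellNorm_Kf_comparable_of_hasIndex (h₀ : IsQuasinorm N₀) (h₁ : IsQuasinorm N₁)
    (hr : r ≠ 0) (hq₁ : q₁ ≠ 0) (hr₀ : r₀ ≠ 0) (hr₁ : r₁ ≠ 0)
    (hV₀ : HasIndex α₀ V₀) (hα₀ : α₀ ∈ Ioo (-1) 0) (hV₁ : HasIndex α₁ V₁) (hα₁ : α₁ ∈ Ioo (-1) 0)
    (hβ : HasIndex 0 β) (hΛ : HasIndex 0 Λ)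
    (hΛβ : dyadicSample Λ ≲≳ rayNorm r₁ (-1) (dyadicSample β))
    (hρ : HasIndex γ ρ) (hγ : 0 < γ) (hw : HasIndex δ w) (hδ : 0 < δ + γ)
    (hV : ∀ t, 0 < t → V₀ t = ρ t * (Λ t * V₁ t)) :
    (fun f => ellNorm r fun k => dyadicSample w k *
      Kf (discreteNormK N₀ N₁ r₀ (dyadicSample V₀))
        (discreteNormR N₀ N₁ r₁ q₁ (dyadicSample β) (dyadicSample V₁)) (ρ (2 ^ k)) f) ≲≳
      fun f => ellNorm r fun k => dyadicSample w k *
        rayNorm r₀ (-1) (sampledK N₀ N₁ (dyadicSample V₀) f) k := by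
  have hβV₁ : DecaysAlong 1 fun k => dyadicSample β k * dyadicSample V₁ k := by
    simpa only [← dyadicSample_mul hβ] using
      (hβ.mul hV₁).decaysAlong (s := 1) (by push_cast; linarith [hα₁.2])
  have hwρ : DecaysAlong (-1) fun k => dyadicSample w k * dyadicSample ρ k := by
    simpa only [← dyadicSample_mul hw] using
      (hw.mul hρ).decaysAlong (s := -1) (by push_cast; linarith)
  have hwρΛ : DecaysAlong (-1) fun k => dyadicSample w k * dyadicSample ρ k * dyadicSample Λ k := by
    simpa only [← dyadicSample_mul hw, ← dyadicSample_mul (hw.mul hρ)] using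
      ((hw.mul hρ).mul hΛ).decaysAlong (s := -1) (by push_cast; linarith)
  have hV₀₁ : (fun k => dyadicSample ρ k *
      (rayNorm r₁ (-1) (dyadicSample β) k * dyadicSample V₁ k)) ≲≳ dyadicSample V₀ := by
    have hV₀' : dyadicSample V₀ =
        fun k => dyadicSample ρ k * (dyadicSample Λ k * dyadicSample V₁ k) := by
      funext k
      rw [← dyadicSample_mul hΛ, ← dyadicSample_mul hρ, dyadicSample, hV _ (by positivity),
        dyadicSample]
    rw [hV₀']
    exact (IsComparable.refl _).mul (hΛβ.symm.mul (.refl _))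
  exact ellNorm_Kf_comparable h₀ h₁ hr hq₁ hr₀ hr₁ (hV₀.isInteriorWeight hα₀.1 hα₀.2)
    (hV₁.isInteriorWeight hα₁.1 hα₁.2) hβV₁ (hρ.decaysAlong (by push_cast; linarith)) hwρ
    (hwρΛ.of_comparable ((IsComparable.refl _).mul hΛβ)) hV₀₁

variable {θ₀ θ₁ θ : ℝ} {a a₁ b₀ b₁ c₁ : ℝ → ℝ}

theorem HasIndex.toReal_LqNorm_Ioo_svWgt (hβ : HasIndex 0 β) (hr : r ≠ 0)
    (hfin : LqNorm r (Ioo 0 1) (svWgt r β) ≠ ∞) :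
    HasIndex 0 (fun t => (LqNorm r (Ioo 0 t) (svWgt r β)).toReal) ∧
      dyadicSample (fun t => (LqNorm r (Ioo 0 t) (svWgt r β)).toReal) ≲≳
        rayNorm r (-1) (dyadicSample β) := by
  have hdlog (t : ℝ) : LqNorm r (Ioo 0 t) (svWgt r β) =
      eLpNorm (fun u => ENNReal.ofReal (β u)) r (dlog.restrict (Ioo 0 t)) :=
    LqNorm_eq_eLpNorm_dlog hr measurableSet_Ioo Ioo_subset_Ioi_self fun _ _ =>
      ENNReal.ofReal_mul (by positivity)
  simp only [hdlog] at hfin ⊢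
  obtain ⟨hne_top, hindex⟩ := hβ.toReal_eLpNorm_ray hr (fun _ => isDyadicPartition_Ioo) hfin
  refine ⟨hindex, .trans (isComparable_of_eq fun k => ofReal_toReal (hne_top _ (by positivity))) ?_⟩
  exact ((hβ.unifDoubling (X := Unit)).eLpNorm_ray_comparable_rayNorm r
    fun _ => isDyadicPartition_Ioo).comp fun k => ((), k)

theorem normK_normK_normR_comparable (h₀ : IsQuasinorm N₀) (h₁ : IsQuasinorm N₁) (hθ₀ : 0 < θ₀)
    (hθ₀₁ : θ₀ < θ₁) (hθ₁ : θ₁ < 1) (hθ : θ < 1) (hr : r ≠ 0) (hq₁ : q₁ ≠ 0) (hr₀ : r₀ ≠ 0)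
    (hr₁ : r₁ ≠ 0) (ha : HasIndex 0 a) (ha₁ : HasIndex 0 a₁) (hb₀ : HasIndex 0 b₀)
    (hb₁ : HasIndex 0 b₁) (hΛ : HasIndex 0 Λ)
    (hΛβ : dyadicSample Λ ≲≳ rayNorm r₁ (-1) (dyadicSample fun t => b₁ t / a₁ t))
    (hρ : HasIndex (θ₁ - θ₀) ρ)
    (hV : ∀ t, 0 < t → t ^ (-θ₀) * b₀ t = ρ t * (Λ t * (t ^ (-θ₁) * a₁ t))) :
    normK (normK N₀ N₁ θ₀ r₀ b₀) (normR N₀ N₁ θ₁ r₁ q₁ b₁ a₁) θ r a ≲≳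
      fun f => ellNorm r fun k => dyadicSample (fun t => ρ t ^ (-θ) * a (ρ t)) k *
        rayNorm r₀ (-1) (sampledK N₀ N₁ (dyadicSample fun t => t ^ (-θ₀) * b₀ t) f) k := by
  set X₀ := normK N₀ N₁ θ₀ r₀ b₀
  set X₁ := normR N₀ N₁ θ₁ r₁ q₁ b₁ a₁
  set Y₀ := discreteNormK N₀ N₁ r₀ (dyadicSample fun t => t ^ (-θ₀) * b₀ t)
  set Y₁ := discreteNormR N₀ N₁ r₁ q₁ (dyadicSample fun t => b₁ t / a₁ t)
    (dyadicSample fun t => t ^ (-θ₁) * a₁ t)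
  set W : ℤ → ℝ≥0∞ := dyadicSample fun t => ρ t ^ (-θ) * a (ρ t)
  have hγ : 0 < θ₁ - θ₀ := sub_pos.2 hθ₀₁
  have hV₀ : HasIndex (-θ₀ + 0) fun t => t ^ (-θ₀) * b₀ t := (hasIndex_rpow _).mul hb₀
  have hV₁ : HasIndex (-θ₁ + 0) fun t => t ^ (-θ₁) * a₁ t := (hasIndex_rpow _).mul ha₁
  have hβ : HasIndex 0 fun t => b₁ t / a₁ t := by simpa only [sub_zero] using hb₁.div ha₁
  have hchange : normK X₀ X₁ θ r a ≲≳ fun f => ellNorm r fun k => W k * Kf X₀ X₁ (ρ (2 ^ k)) f :=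
    (ha.normK_comparable hr X₀ X₁ θ).trans
      ((ha.unifDoubling_mul_Kf X₀ X₁ θ).ellNorm_comp_comparable hr hρ hγ)
  have hdiscrete : (fun f => ellNorm r fun k => W k * Kf X₀ X₁ (ρ (2 ^ k)) f) ≲≳
      fun f => ellNorm r fun k => W k * Kf Y₀ Y₁ (ρ (2 ^ k)) f := by
    have hK := (Kf_comparable (hb₀.normK_comparable hr₀ N₀ N₁ θ₀)
      (ha₁.normR_comparable hb₁ hq₁ hr₁ N₀ N₁ θ₁)).comp fun p : G × ℤ => (p.1, ρ (2 ^ p.2))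
    exact .ellNorm hr ((IsComparable.refl fun p : G × ℤ => W p.2).mul hK)
  refine (hchange.trans hdiscrete).trans ?_
  refine ellNorm_Kf_comparable_of_hasIndex h₀ h₁ hr hq₁ hr₀ hr₁ hV₀ ?_ hV₁ ?_ hβ hΛ hΛβ hρ hγ
    (((hasIndex_rpow (-θ)).mul ha).comp hρ) ?_ hV
  · constructor <;> linarith
  · constructor <;> linarith
  · nlinarith

theorem rpow_weight_mul_rpow_weight {t : ℝ} (ht : 0 < t) (hb₀ : 0 < b₀ t) (hc₁ : 0 < c₁ t)
    (hρ : ρ t = t ^ (θ₁ - θ₀) * (b₀ t / c₁ t)) :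
    ρ t ^ (-θ) * a (ρ t) * (t ^ (-θ₀) * b₀ t) =
      t ^ (-((1 - θ) * θ₀ + θ * θ₁)) * (b₀ t ^ (1 - θ) * c₁ t ^ θ * a (ρ t)) := by
  have hρθ : ρ t ^ (-θ) = t ^ (-θ * (θ₁ - θ₀)) * (b₀ t ^ (-θ) * c₁ t ^ θ) := by
    rw [hρ, Real.mul_rpow (by positivity) (by positivity), ← Real.rpow_mul ht.le,
      Real.div_rpow hb₀.le hc₁.le, Real.rpow_neg hc₁.le, div_inv_eq_mul, mul_comm (θ₁ - θ₀)]
  have hη : t ^ (-((1 - θ) * θ₀ + θ * θ₁)) = t ^ (-θ * (θ₁ - θ₀)) * t ^ (-θ₀) := by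
    rw [← Real.rpow_add ht]
    congr 1
    ring
  have hbθ : b₀ t ^ (1 - θ) = b₀ t ^ (-θ) * b₀ t := by
    rw [sub_eq_neg_add, Real.rpow_add hb₀, Real.rpow_one]
  rw [hρθ, hη, hbθ]
  ring

theorem ellNorm_mul_rayNorm_sampledK_comparable_normK (hr : r ≠ 0) (hr₀ : r₀ ≠ 0)
    (hθ₀₁ : θ₀ < θ₁) (hθ : 0 < θ) (ha : HasIndex 0 a) (hb₀ : HasIndex 0 b₀) (hc₁ : HasIndex 0 c₁)
    (hρ : HasIndex (θ₁ - θ₀) ρ) (hρ' : ∀ t, ρ t = t ^ (θ₁ - θ₀) * (b₀ t / c₁ t))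
    (N₀ N₁ : G → ℝ≥0∞) :
    (fun f => ellNorm r fun k => dyadicSample (fun t => ρ t ^ (-θ) * a (ρ t)) k *
      rayNorm r₀ (-1) (sampledK N₀ N₁ (dyadicSample fun t => t ^ (-θ₀) * b₀ t) f) k) ≲≳
      normK N₀ N₁ ((1 - θ) * θ₀ + θ * θ₁) r fun t => b₀ t ^ (1 - θ) * c₁ t ^ θ * a (ρ t) := by
  have hw : HasIndex ((-θ + 0) * (θ₁ - θ₀)) fun t => ρ t ^ (-θ) * a (ρ t) :=
    ((hasIndex_rpow (-θ)).mul ha).comp hρ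
  have hb : HasIndex ((1 - θ) * 0 + θ * 0 + 0 * (θ₁ - θ₀))
      fun t => b₀ t ^ (1 - θ) * c₁ t ^ θ * a (ρ t) :=
    (((hasIndex_rpow (1 - θ)).comp hb₀).mul ((hasIndex_rpow θ).comp hc₁)).mul (ha.comp hρ)
  have hdecay := hw.decaysAlong (s := -(-1)) (by push_cast; nlinarith [sub_pos.2 hθ₀₁])
  refine ((ellNorm_mul_rayNorm_comparable hdecay hr₀ hr).comp
    (sampledK N₀ N₁ (dyadicSample fun t => t ^ (-θ₀) * b₀ t))).trans
    (.trans (isComparable_of_eq fun f => ?_) (hb.normK_comparable hr N₀ N₁ _).symm)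
  refine congrArg (ellNorm r) (funext fun k => ?_)
  have hk : (0 : ℝ) < 2 ^ k := by positivity
  rw [sampledK, sampledK, ← mul_assoc, ← dyadicSample_mul hw, dyadicSample,
    rpow_weight_mul_rpow_weight hk (hb₀.pos hk) (hc₁.pos hk) (hρ' _), dyadicSample]

theorem ellNorm_mul_rayNorm_sampledK_comparable_normL (hr : r ≠ 0) (hr₀ : r₀ ≠ 0) {γ : ℝ}
    (ha : HasIndex 0 a) (hb₀ : HasIndex 0 b₀) (hρ : HasIndex γ ρ) (N₀ N₁ : G → ℝ≥0∞) :
    (fun f => ellNorm r fun k => dyadicSample (fun t => ρ t ^ (-0 : ℝ) * a (ρ t)) k *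
      rayNorm r₀ (-1) (sampledK N₀ N₁ (dyadicSample fun t => t ^ (-θ₀) * b₀ t) f) k) ≲≳
      normL N₀ N₁ θ₀ r r₀ (fun t => b₀ t * a (ρ t)) b₀ := by
  refine .trans (isComparable_of_eq fun f => congrArg (ellNorm r) (funext fun k => ?_))
    (hb₀.normL_comparable (hb₀.mul (ha.comp hρ)) hr₀ hr N₀ N₁ θ₀).symm
  rw [dyadicSample, dyadicSample, neg_zero, Real.rpow_zero, one_mul,
    mul_div_cancel_left₀ _ (hb₀.pos (by positivity)).ne']

end Interpolation

theorem theorem19_general {G : Type*} [AddCommGroup G] {N₀ N₁ : G → ℝ≥0∞} (h₀ : IsQuasinorm N₀)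
    (h₁ : IsQuasinorm N₁) {θ₀ θ₁ : ℝ} (hθ₀ : 0 < θ₀) (hθ₀₁ : θ₀ < θ₁) (hθ₁ : θ₁ < 1)
    {q₁ r₀ r₁ r : ℝ≥0∞} (hq₁ : q₁ ≠ 0) (hr₀ : r₀ ≠ 0) (hr₁ : r₁ ≠ 0) (hr : r ≠ 0)
    {a a₁ b₀ b₁ : ℝ → ℝ} (ha : HasIndex 0 a) (ha₁ : HasIndex 0 a₁) (hb₀ : HasIndex 0 b₀)
    (hb₁ : HasIndex 0 b₁)
    (hfin : LqNorm r₁ (Ioo 0 1) (svWgt r₁ (fun s => b₁ s / a₁ s)) ≠ ∞) {c₁ ρ : ℝ → ℝ}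
    (hc₁ : ∀ t, c₁ t = a₁ t * (LqNorm r₁ (Ioo 0 t) (svWgt r₁ (fun s => b₁ s / a₁ s))).toReal)
    (hρ : ∀ t, ρ t = t ^ (θ₁ - θ₀) * (b₀ t / c₁ t)) :
    (∀ θ : ℝ, 0 < θ → θ < 1 → EquivNorms
      (normK (normK N₀ N₁ θ₀ r₀ b₀) (normR N₀ N₁ θ₁ r₁ q₁ b₁ a₁) θ r a)
      (normK N₀ N₁ ((1 - θ) * θ₀ + θ * θ₁) r fun t => b₀ t ^ (1 - θ) * c₁ t ^ θ * a (ρ t))) ∧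
    EquivNorms (normK (normK N₀ N₁ θ₀ r₀ b₀) (normR N₀ N₁ θ₁ r₁ q₁ b₁ a₁) 0 r a)
      (normL N₀ N₁ θ₀ r r₀ (fun t => b₀ t * a (ρ t)) b₀) := by
  have hβ : HasIndex 0 fun t => b₁ t / a₁ t := by simpa only [sub_zero] using hb₁.div ha₁
  obtain ⟨hΛ, hΛβ⟩ := hβ.toReal_LqNorm_Ioo_svWgt hr₁ hfin
  have hc₁' : HasIndex 0 c₁ := by simpa only [← hc₁, add_zero] using ha₁.mul hΛ
  have hρ' : HasIndex (θ₁ - θ₀) ρ := by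
    simpa only [← hρ, sub_zero, add_zero] using (hasIndex_rpow (θ₁ - θ₀)).mul (hb₀.div hc₁')
  have hV (t : ℝ) (ht : 0 < t) : t ^ (-θ₀) * b₀ t = ρ t *
      ((LqNorm r₁ (Ioo 0 t) (svWgt r₁ fun s => b₁ s / a₁ s)).toReal * (t ^ (-θ₁) * a₁ t)) := by
    have hpow : t ^ (-θ₀) = t ^ (θ₁ - θ₀) * t ^ (-θ₁) := by
      rw [← Real.rpow_add ht]
      congr 1
      ring
    have := (hc₁'.pos ht).ne'
    rw [hρ, hpow, mul_left_comm _ (t ^ (-θ₁)), mul_comm _ (a₁ t), ← hc₁]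
    field_simp
  have hmain (θ : ℝ) (hθ : θ < 1) := normK_normK_normR_comparable (r := r) (q₁ := q₁) (r₀ := r₀)
    h₀ h₁ hθ₀ hθ₀₁ hθ₁ hθ hr hq₁ hr₀ hr₁ ha ha₁ hb₀ hb₁ hΛ hΛβ hρ' hV
  exact ⟨fun θ hθ hθ' => ((hmain θ hθ').trans (ellNorm_mul_rayNorm_sampledK_comparable_normK
      hr hr₀ hθ₀₁ hθ ha hb₀ hc₁' hρ' hρ N₀ N₁)).equivNorms,
    ((hmain 0 one_pos).trans (ellNorm_mul_rayNorm_sampledK_comparable_normL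
      hr hr₀ ha hb₀ hρ' N₀ N₁)).equivNorms⟩

theorem theorem19
    (A₀ A₁ : QuasiBanach E)
    (hne : ∃ x : E, x ≠ 0 ∧ A₀.N x ≠ ∞ ∧ A₁.N x ≠ ∞)
    (θ₀ θ₁ : ℝ) (hθ₀ : 0 < θ₀) (hθ₀₁ : θ₀ < θ₁) (hθ₁ : θ₁ < 1)
    (q₁ r₀ r₁ r : ℝ≥0∞) (hq₁ : 0 < q₁) (hr₀ : 0 < r₀) (hr₁ : 0 < r₁) (hr : 0 < r)
    (a a₁ b₀ b₁ : ℝ → ℝ)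
    (h_sv_a : SlowlyVarying a)
    (h_sv_a₁ : SlowlyVarying a₁)
    (h_sv_b₀ : SlowlyVarying b₀)
    (h_sv_b₁ : SlowlyVarying b₁)
    (hfin : LqNorm r₁ (Ioo 0 1) (svWgt r₁ (fun s => b₁ s / a₁ s)) ≠ ∞)
    (c₁ ρ : ℝ → ℝ)
    (hc₁ : ∀ t, c₁ t = a₁ t * (LqNorm r₁ (Ioo 0 t) (svWgt r₁ (fun s => b₁ s / a₁ s))).toReal)
    (hρ : ∀ t, ρ t = t ^ (θ₁ - θ₀) * (b₀ t / c₁ t)) :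
    (∀ θ : ℝ, 0 < θ → θ < 1 →
      EquivNorms
        (normK (normK A₀.N A₁.N θ₀ r₀ b₀) (normR A₀.N A₁.N θ₁ r₁ q₁ b₁ a₁) θ r a)
        (normK A₀.N A₁.N ((1 - θ) * θ₀ + θ * θ₁) r
          (fun t => b₀ t ^ (1 - θ) * c₁ t ^ θ * a (ρ t)))) ∧
    (LqNorm r (Ioi 1) (svWgt r (fun s => a s)) ≠ ∞ →
      EquivNorms
        (normK (normK A₀.N A₁.N θ₀ r₀ b₀) (normR A₀.N A₁.N θ₁ r₁ q₁ b₁ a₁) 0 r a)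
        (normL A₀.N A₁.N θ₀ r r₀ (fun t => b₀ t * a (ρ t)) b₀)) := by
  have h := theorem19_general A₀.isQuasinorm A₁.isQuasinorm hθ₀ hθ₀₁ hθ₁ hq₁.ne' hr₀.ne' hr₁.ne'
    hr.ne' h_sv_a.hasIndex h_sv_a₁.hasIndex h_sv_b₀.hasIndex h_sv_b₁.hasIndex hfin hc₁ hρ
  exact ⟨h.1, fun _ => h.2⟩

end
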